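/- arXiv:2409.20240 — 6 statements merged into one kernel-verified Lean document; each statement's English description precedes it below -/
import Mathlib

section
/- Let Γ be a group and let (ρ, V) and (ρ', V') be finite-dimensional complex representations of Γ that are semisimple (V and V' are semisimple as modules over the monoid algebra ℂ[Γ]). If tr ρ(γ) = tr ρ'(γ) for all γ ∈ Γ, then ρ and ρ' are isomorphic: there exists a ℂ-linear isomorphism T : V → V' with T ∘ ρ(γ) = ρ'(γ) ∘ T for all γ ∈ Γ. -/
noncomputable section

/-- trace of the action of an algebra element -/
def trAct (A : Type) [Ring A] [Algebra ℂ A] (M : Type) [AddCommGroup M] [Module ℂ M]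
    [Module A M] [IsScalarTower ℂ A M] (a : A) : ℂ :=
  LinearMap.trace ℂ M (Algebra.lsmul ℂ ℂ M a)

section
variable {A : Type} [Ring A] [Algebra ℂ A]
  {M N P Q : Type} [AddCommGroup M] [Module ℂ M] [Module A M] [IsScalarTower ℂ A M]
  [AddCommGroup N] [Module ℂ N] [Module A N] [IsScalarTower ℂ A N]

theorem trAct_congr (e : M ≃ₗ[A] N) (a : A) : trAct A M a = trAct A N a := by
  unfold trAct
  rw [← LinearMap.trace_conj' _ (e.restrictScalars ℂ)]
  congr 1
  ext x
  simp [LinearEquiv.conj_apply]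

theorem trAct_prod [FiniteDimensional ℂ M] [FiniteDimensional ℂ N] (a : A) :
    trAct A (M × N) a = trAct A M a + trAct A N a := by
  unfold trAct
  rw [← LinearMap.trace_prodMap']
  congr 1

theorem split_of_hom [IsSemisimpleModule A M] [IsSemisimpleModule A N] (f : M →ₗ[A] N) :
    ∃ C : Submodule A N, Nonempty (M ≃ₗ[A] LinearMap.ker f × LinearMap.range f) ∧
      Nonempty (N ≃ₗ[A] C × LinearMap.range f) := by
  obtain ⟨C, hC⟩ := exists_isCompl (LinearMap.range f)
  obtain ⟨D, hD⟩ := exists_isCompl (LinearMap.ker f)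
  refine ⟨C, ⟨?_⟩, ⟨(Submodule.prodEquivOfIsCompl _ _ hC.symm).symm⟩⟩
  have e : D ≃ₗ[A] LinearMap.range f :=
    (Submodule.quotientEquivOfIsCompl _ _ hD).symm.trans f.quotKerEquivRange
  exact (Submodule.prodEquivOfIsCompl _ _ hD).symm.trans
    (LinearEquiv.prodCongr (LinearEquiv.refl A _) e)

theorem sub_tower (p : Submodule A M) : IsScalarTower ℂ A p := inferInstance
theorem sub_fin [FiniteDimensional ℂ M] (p : Submodule A M) : FiniteDimensional ℂ p :=
  FiniteDimensional.finiteDimensional_submodule (p.restrictScalars ℂ)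

theorem disjoint_case [FiniteDimensional ℂ M] [FiniteDimensional ℂ N]
    [IsSemisimpleModule A M] [IsSemisimpleModule A N]
    (h1 : ∀ f : M →ₗ[A] N, f = 0) (h2 : ∀ f : N →ₗ[A] M, f = 0)
    (htr : ∀ a : A, trAct A M a = trAct A N a) : Module.finrank ℂ M = 0 := by
  have : IsSemisimpleModule A (M × N) := by
    have a1 := IsSemisimpleModule.range (LinearMap.inl A M N)
    have a2 := IsSemisimpleModule.range (LinearMap.inr A M N)
    have a3 := IsSemisimpleModule.sup a1 a2
    rw [LinearMap.sup_range_inl_inr] at a3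
    exact IsSemisimpleModule.congr (Submodule.topEquiv (R := A) (M := M × N)).symm
  let p : Module.End (Module.End A (M × N)) (M × N) :=
    { toFun := fun x => (x.1, 0)
      map_add' := by intro x y; simp
      map_smul' := by
        intro g x
        have a1 := congrArg (fun k => k x.1)
          (h1 ((LinearMap.snd A M N).comp (g.comp (LinearMap.inl A M N))))
        have a2 := congrArg (fun k => k x.2)
          (h2 ((LinearMap.fst A M N).comp (g.comp (LinearMap.inr A M N))))
        simp at a1 a2
        have hx : g x = g (x.1, 0) + g (0, x.2) := by rw [← map_add]; simp
        simp only [Module.End.smul_def, RingHom.id_apply]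
        ext
        · rw [hx]; simp [a2]
        · simp [a1] }
  obtain ⟨s, hs⟩ := Module.Finite.fg_top (R := ℂ) (M := M × N)
  obtain ⟨a, ha⟩ := jacobson_density (R := A) p s
  have key : ∀ x : M × N, (x.1, (0 : N)) = a • x := by
    intro x
    induction hs.ge (trivial : x ∈ ⊤) using Submodule.span_induction with
    | mem m hm => exact ha m hm
    | zero => simp
    | add x y _ _ h₁ h₂ => rw [smul_add, ← h₁, ← h₂]; simp
    | smul c x _ h => rw [smul_comm a c x, ← h]; simp
  have e1 : Algebra.lsmul ℂ ℂ M a = LinearMap.id := by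
    ext x
    exact (congrArg Prod.fst (key (x, 0))).symm
  have e2 : Algebra.lsmul ℂ ℂ N a = 0 := by
    ext x
    exact (congrArg Prod.snd (key (0, x))).symm
  have := htr a
  unfold trAct at this
  rw [e1, e2, LinearMap.trace_id, map_zero] at this
  exact_mod_cast this
end

theorem main_aux (A : Type) [Ring A] [Algebra ℂ A] (n : ℕ) :
    ∀ (M N : Type) [AddCommGroup M] [Module ℂ M] [Module A M] [IsScalarTower ℂ A M]
      [AddCommGroup N] [Module ℂ N] [Module A N] [IsScalarTower ℂ A N]
      [FiniteDimensional ℂ M] [FiniteDimensional ℂ N]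
      [IsSemisimpleModule A M] [IsSemisimpleModule A N],
      Module.finrank ℂ M + Module.finrank ℂ N = n →
      (∀ a : A, trAct A M a = trAct A N a) → Nonempty (M ≃ₗ[A] N) := by
  induction n using Nat.strong_induction_on with
  | _ n ih =>
  have step : ∀ (M N : Type) [AddCommGroup M] [Module ℂ M] [Module A M] [IsScalarTower ℂ A M]
      [AddCommGroup N] [Module ℂ N] [Module A N] [IsScalarTower ℂ A N]
      [FiniteDimensional ℂ M] [FiniteDimensional ℂ N]
      [IsSemisimpleModule A M] [IsSemisimpleModule A N],
      Module.finrank ℂ M + Module.finrank ℂ N = n →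
      (∀ a : A, trAct A M a = trAct A N a) → (∃ f : M →ₗ[A] N, f ≠ 0) →
      Nonempty (M ≃ₗ[A] N) := by
    intro M N _ _ _ _ _ _ _ _ _ _ _ _ hn htr ⟨f, hf⟩
    obtain ⟨C, ⟨e1⟩, ⟨e2⟩⟩ := split_of_hom f
    have i1 := sub_fin (LinearMap.ker f)
    have i2 := sub_fin (LinearMap.range f)
    have i3 := sub_fin C
    have d1 := (e1.restrictScalars ℂ).finrank_eq
    have d2 := (e2.restrictScalars ℂ).finrank_eq
    rw [Module.finrank_prod] at d1 d2
    have hpos : 0 < Module.finrank ℂ (LinearMap.range f) := by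
      have : Nontrivial (LinearMap.range f) := by
        rw [Submodule.nontrivial_iff_ne_bot]
        intro h
        exact hf (LinearMap.range_eq_bot.mp h)
      exact Module.finrank_pos
    obtain ⟨e⟩ := ih (Module.finrank ℂ (LinearMap.ker f) + Module.finrank ℂ C) (by omega)
      (LinearMap.ker f) C rfl (fun a => by
        have := htr a
        rw [trAct_congr e1, trAct_congr e2, trAct_prod, trAct_prod] at this
        exact add_right_cancel this)
    exact ⟨e1.trans ((LinearEquiv.prodCongr e (LinearEquiv.refl A _)).trans e2.symm)⟩
  intro M N _ _ _ _ _ _ _ _ _ _ _ _ hn htr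
  by_cases h1 : ∃ f : M →ₗ[A] N, f ≠ 0
  · exact step M N hn htr h1
  by_cases h2 : ∃ f : N →ₗ[A] M, f ≠ 0
  · obtain ⟨e⟩ := step N M (by omega) (fun a => (htr a).symm) h2
    exact ⟨e.symm⟩
  push Not at h1 h2
  have z1 := disjoint_case h1 h2 htr
  have z2 := disjoint_case h2 h1 (fun a => (htr a).symm)
  have := Module.finrank_zero_iff.mp z1
  have := Module.finrank_zero_iff.mp z2
  exact ⟨LinearEquiv.ofSubsingleton M N⟩

theorem trAct_rep (Γ : Type) [Group Γ] (V : Type) [AddCommGroup V] [Module ℂ V]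
    (ρ : Representation ℂ Γ V) (a : MonoidAlgebra ℂ Γ) :
    trAct (MonoidAlgebra ℂ Γ) ρ.asModule a = LinearMap.trace ℂ V (ρ.asAlgebraHom a) := by
  unfold trAct
  rw [← LinearMap.trace_conj' _ ρ.asModuleEquiv]
  congr 1

/-- Two finite-dimensional semisimple complex representations of a group `Γ` with equal
trace characters are isomorphic.  Semisimplicity is expressed as semisimplicity of the
associated modules over the monoid algebra `ℂ[Γ]`, and an isomorphism is a `ℂ`-linear
equivalence intertwining the two actions. -/
theorem statement8 (Γ : Type) [Group Γ]
    (V V' : Type) [AddCommGroup V] [Module ℂ V] [FiniteDimensional ℂ V]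
    [AddCommGroup V'] [Module ℂ V'] [FiniteDimensional ℂ V']
    (ρ : Representation ℂ Γ V) (ρ' : Representation ℂ Γ V')
    (hρ : IsSemisimpleModule (MonoidAlgebra ℂ Γ) ρ.asModule)
    (hρ' : IsSemisimpleModule (MonoidAlgebra ℂ Γ) ρ'.asModule)
    (htr : ∀ γ : Γ, LinearMap.trace ℂ V (ρ γ) = LinearMap.trace ℂ V' (ρ' γ)) :
    ∃ T : V ≃ₗ[ℂ] V', ∀ (γ : Γ) (v : V), T (ρ γ v) = ρ' γ (T v) := by
  have ht : ∀ a : MonoidAlgebra ℂ Γ, trAct (MonoidAlgebra ℂ Γ) ρ.asModule a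
      = trAct (MonoidAlgebra ℂ Γ) ρ'.asModule a := by
    intro a
    rw [trAct_rep, trAct_rep]
    induction a using MonoidAlgebra.induction_on with
    | of g => simpa using htr g
    | add x y hx hy => simp only [map_add, hx, hy]
    | smul c x hx => simp only [map_smul, hx]
  obtain ⟨e⟩ := main_aux (MonoidAlgebra ℂ Γ) _ ρ.asModule ρ'.asModule rfl ht
  refine ⟨ρ.asModuleEquiv.symm.trans ((e.restrictScalars ℂ).trans ρ'.asModuleEquiv), ?_⟩
  intro γ v
  simp only [LinearEquiv.trans_apply, LinearEquiv.restrictScalars_apply,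
    Representation.asModuleEquiv_symm_map_rho, map_smul, Representation.asModuleEquiv_map_smul,
    Representation.asAlgebraHom_of]

end
end

section
/- For every n ≥ 1, the special linear group SL_n(ℂ) is acceptable: for every finite group Γ and homomorphisms φ, φ' : Γ → SL_n(ℂ) such that φ(γ) and φ'(γ) are conjugate in SL_n(ℂ) for every γ ∈ Γ, there exists g ∈ SL_n(ℂ) with φ'(γ) = g φ(γ) g⁻¹ for all γ ∈ Γ. -/
noncomputable section

namespace Accept

open Matrix

variable {n : ℕ} {Γ : Type} [Group Γ] [Fintype Γ]

theorem avg (A B : Γ →* Matrix (Fin n) (Fin n) ℂ) (X : Matrix (Fin n) (Fin n) ℂ) (k : Γ) :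
    B k * (∑ h, B h * X * A h⁻¹) = (∑ h, B h * X * A h⁻¹) * A k := by
  rw [Finset.mul_sum, Finset.sum_mul]
  refine Fintype.sum_equiv (Equiv.mulLeft k) _ _ fun h => ?_
  have : A h⁻¹ = A (k * h)⁻¹ * A k := by rw [← map_mul]; congr 1; group
  simp only [Equiv.coe_mulLeft, mul_assoc, ← this, map_mul B]

theorem pinv (f : Matrix (Fin n) (Fin n) ℂ) : ∃ g : Matrix (Fin n) (Fin n) ℂ, f * g * f = f := by
  obtain ⟨s, hs⟩ := f.toLin'.rangeRestrict.exists_rightInverse_of_surjective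
    (LinearMap.range_rangeRestrict _)
  obtain ⟨t, ht⟩ := s.exists_extend
  refine ⟨LinearMap.toMatrix' t, ?_⟩
  apply Matrix.toLin'.injective
  rw [Matrix.toLin'_mul, Matrix.toLin'_mul, Matrix.toLin'_toMatrix']
  ext1 i
  ext1
  have h1 := LinearMap.congr_fun ht (f.toLin'.rangeRestrict (Pi.single i 1))
  have h2 := congrArg Subtype.val
    (LinearMap.congr_fun hs (f.toLin'.rangeRestrict (Pi.single i 1)))
  simp only [LinearMap.comp_apply, Submodule.subtype_apply, LinearMap.codRestrict_apply,
    LinearMap.rangeRestrict, LinearMap.id_apply, LinearMap.single_apply] at h1 h2 ⊢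
  rw [h1, h2]

theorem pinv_eq (A B : Γ →* Matrix (Fin n) (Fin n) ℂ) (f : Matrix (Fin n) (Fin n) ℂ)
    (hf : ∀ k, B k * f = f * A k) :
    ∃ g : Matrix (Fin n) (Fin n) ℂ, f * g * f = f ∧ ∀ k, A k * g = g * B k := by
  obtain ⟨g, hg⟩ := pinv f
  have hN : (Fintype.card Γ : ℂ) ≠ 0 := by exact_mod_cast Fintype.card_ne_zero
  refine ⟨(Fintype.card Γ : ℂ)⁻¹ • ∑ h, A h * g * B h⁻¹, ?_, fun k => ?_⟩
  · have : ∀ h, f * (A h * g * B h⁻¹) * f = f := fun h => by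
      have h1 : f * (A h * g * B h⁻¹) * f = B h * (f * g * f) * A h⁻¹ := by
        calc _ = (f * A h) * g * (B h⁻¹ * f) := by simp only [mul_assoc]
          _ = _ := by rw [← hf h, hf h⁻¹]; simp only [mul_assoc]
      rw [h1, hg, hf, mul_assoc, ← map_mul]; simp
    rw [Matrix.mul_smul, Matrix.smul_mul, Finset.mul_sum, Finset.sum_mul]
    simp only [this]
    rw [Finset.sum_const, Finset.card_univ, ← Nat.cast_smul_eq_nsmul ℂ, smul_smul,
      inv_mul_cancel₀ hN, one_smul]
  · rw [Matrix.mul_smul, Matrix.smul_mul, avg B A]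

def sw (P Q : Matrix (Fin n) (Fin n) ℂ) :
    Matrix (Fin n) (Fin n) ℂ →ₗ[ℂ] Matrix (Fin n) (Fin n) ℂ :=
  LinearMap.mulLeft ℂ P ∘ₗ LinearMap.mulRight ℂ Q

theorem sw_apply (P Q X : Matrix (Fin n) (Fin n) ℂ) : sw P Q X = P * X * Q := by
  simp [sw, mul_assoc]

theorem trace_sw (P Q : Matrix (Fin n) (Fin n) ℂ) :
    LinearMap.trace ℂ _ (sw P Q) = P.trace * Q.trace := by
  rw [LinearMap.trace_eq_matrix_trace ℂ (Matrix.stdBasis ℂ (Fin n) (Fin n)), Matrix.trace,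
    Fintype.sum_prod_type, Matrix.trace, Matrix.trace, Finset.sum_mul_sum]
  refine Finset.sum_congr rfl fun i _ => Finset.sum_congr rfl fun j _ => ?_
  rw [Matrix.diag_apply, LinearMap.toMatrix_apply, Matrix.stdBasis_eq_single, sw_apply]
  have : ∀ M : Matrix (Fin n) (Fin n) ℂ,
      (Matrix.stdBasis ℂ (Fin n) (Fin n)).repr M (i, j) = M i j := fun M => by
    simp [Matrix.stdBasis]
  rw [this]
  simp [Matrix.mul_apply, Matrix.single_apply, ite_and]

theorem step (A B : Γ →* Matrix (Fin n) (Fin n) ℂ) (htr : ∀ k, (B k).trace = (A k).trace)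
    (f : Matrix (Fin n) (Fin n) ℂ) (hf : ∀ k, B k * f = f * A k) (hd : f.det = 0) :
    ∃ f₂ : Matrix (Fin n) (Fin n) ℂ, (∀ k, B k * f₂ = f₂ * A k) ∧
      LinearMap.ker f₂.mulVecLin < LinearMap.ker f.mulVecLin := by
  obtain ⟨g, hg, hgk⟩ := pinv_eq A B f hf
  have hN : (Fintype.card Γ : ℂ) ≠ 0 := by exact_mod_cast Fintype.card_ne_zero
  obtain ⟨p, hp⟩ : ∃ p, p = 1 - g * f := ⟨_, rfl⟩
  obtain ⟨q, hq⟩ : ∃ q, q = 1 - f * g := ⟨_, rfl⟩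
  have hfp : f * p = 0 := by rw [hp, mul_sub, mul_one, ← mul_assoc, hg, sub_self]
  have hqf : q * f = 0 := by rw [hq, sub_mul, one_mul, hg, sub_self]
  have hpp : p * p = p := by
    nth_rw 1 [hp]; rw [sub_mul, one_mul, mul_assoc, hfp, mul_zero, sub_zero]
  have hqq : q * q = q := by
    nth_rw 2 [hq]; rw [mul_sub, mul_one, ← mul_assoc, hqf, zero_mul, sub_zero]
  have hAp : ∀ k, A k * p = p * A k := fun k => by
    rw [hp, mul_sub, sub_mul, ← mul_assoc, hgk, mul_assoc, hf, mul_one, one_mul, mul_assoc]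
  have hBq : ∀ k, B k * q = q * B k := fun k => by
    rw [hq, mul_sub, sub_mul, ← mul_assoc, hf, mul_assoc, hgk, mul_one, one_mul, mul_assoc]
  have hp0 : p ≠ 0 := by
    intro h0
    rw [h0] at hp
    have h1 : g * f = 1 := (sub_eq_zero.mp hp.symm).symm
    have := congrArg Matrix.det h1
    rw [Matrix.det_mul, hd, mul_zero, Matrix.det_one] at this
    exact zero_ne_one this
  have htpq : ∀ k, (B k * q).trace = (A k * p).trace := fun k => by
    rw [hp, hq, mul_sub, mul_sub, mul_one, mul_one, Matrix.trace_sub, Matrix.trace_sub, htr,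
      ← mul_assoc, hf, ← mul_assoc, Matrix.trace_mul_comm (A k * g) f, mul_assoc]
  obtain ⟨X, hX⟩ : ∃ X, (∑ h, sw (B h * q) (p * A h⁻¹)) X ≠ 0 := by
    by_contra! hcon
    have hT : (∑ h, sw (B h * q) (p * A h⁻¹)) = 0 := LinearMap.ext hcon
    have hT2 := congrArg (LinearMap.trace ℂ _) hT
    rw [map_sum, map_zero] at hT2
    simp only [trace_sw, htpq] at hT2
    obtain ⟨L, hL⟩ : ∃ L, L = (Fintype.card Γ : ℂ)⁻¹ • ∑ h, sw (A h * p) (p * A h⁻¹) := ⟨_, rfl⟩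
    have hLt : LinearMap.trace ℂ _ L = 0 := by
      rw [hL, map_smul, map_sum]
      simp only [trace_sw]
      rw [hT2, smul_zero]
    have hLa : ∀ X, L X = (Fintype.card Γ : ℂ)⁻¹ • ∑ h, A h * (p * X * p) * A h⁻¹ := fun X => by
      simp only [hL, LinearMap.smul_apply, LinearMap.sum_apply, sw_apply, mul_assoc]
    have hfix : ∀ Y, (∀ k, A k * Y = Y * A k) → p * Y * p = Y → L Y = Y := fun Y h1 h2 => by
      rw [hLa, h2]
      have : ∀ h, A h * Y * A h⁻¹ = Y := fun h => by rw [h1, mul_assoc, ← map_mul]; simp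
      simp only [this]
      rw [Finset.sum_const, Finset.card_univ, ← Nat.cast_smul_eq_nsmul ℂ, smul_smul,
        inv_mul_cancel₀ hN, one_smul]
    have hid : IsIdempotentElem L := by
      refine LinearMap.ext fun X => ?_
      rw [Module.End.mul_apply]
      apply hfix
      · intro k
        rw [hLa, Matrix.mul_smul, Matrix.smul_mul, avg A A]
      · rw [hLa, Matrix.mul_smul, Matrix.smul_mul, Finset.mul_sum, Finset.sum_mul]
        congr 1
        refine Finset.sum_congr rfl fun h _ => ?_
        calc _ = (p * A h) * (p * X * p) * (A h⁻¹ * p) := by simp only [mul_assoc]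
          _ = A h * ((p * p) * X * (p * p)) * A h⁻¹ := by
            rw [← hAp, hAp h⁻¹]; simp only [mul_assoc]
          _ = _ := by rw [hpp]
    have hL0 := (LinearMap.IsIdempotentElem.trace_eq_zero_iff hid).1 hLt
    apply hp0
    rw [← hfix p hAp (by rw [hpp, hpp]), hL0, LinearMap.zero_apply]
  simp only [LinearMap.sum_apply, sw_apply] at hX
  obtain ⟨Y, hY⟩ : ∃ Y, Y = ∑ h, B h * (q * X * p) * A h⁻¹ := ⟨_, rfl⟩
  have hY0 : Y ≠ 0 := by
    rw [hY]; simpa only [mul_assoc] using hX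
  have hYk : ∀ k, B k * Y = Y * A k := fun k => by rw [hY]; exact avg A B _ k
  have hqY : q * Y = Y := by
    rw [hY, Finset.mul_sum]
    refine Finset.sum_congr rfl fun h _ => ?_
    rw [← mul_assoc, ← mul_assoc, ← hBq, mul_assoc (B h), ← mul_assoc q, ← mul_assoc q, hqq]
  have hYp : Y * p = Y := by
    rw [hY, Finset.sum_mul]
    refine Finset.sum_congr rfl fun h _ => ?_
    rw [mul_assoc, hAp, ← mul_assoc, mul_assoc (B h), mul_assoc (q * X), hpp]
  refine ⟨f + Y, fun k => by rw [mul_add, add_mul, hf, hYk], ?_⟩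
  refine lt_of_le_of_ne ?_ ?_
  · intro x hx
    rw [LinearMap.mem_ker, Matrix.mulVecLin_apply] at hx ⊢
    have h1 : q *ᵥ ((f + Y) *ᵥ x) = 0 := by rw [hx, Matrix.mulVec_zero]
    rw [Matrix.mulVec_mulVec, mul_add, hqf, hqY, zero_add] at h1
    rwa [Matrix.add_mulVec, h1, add_zero] at hx
  · intro heq
    apply hY0
    apply Matrix.ext_of_mulVec_single
    intro i
    have h1 : p *ᵥ (Pi.single i 1) ∈ LinearMap.ker f.mulVecLin := by
      rw [LinearMap.mem_ker, Matrix.mulVecLin_apply, Matrix.mulVec_mulVec, hfp, Matrix.zero_mulVec]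
    rw [← heq, LinearMap.mem_ker, Matrix.mulVecLin_apply, Matrix.mulVec_mulVec, add_mul, hfp,
      hYp, zero_add] at h1
    rw [h1, Matrix.zero_mulVec]

theorem exists_inv (A B : Γ →* Matrix (Fin n) (Fin n) ℂ)
    (htr : ∀ k, (B k).trace = (A k).trace) :
    ∃ f : Matrix (Fin n) (Fin n) ℂ, (∀ k, B k * f = f * A k) ∧ f.det ≠ 0 := by
  by_contra! hcon
  have key : ∀ (d : ℕ) (f : Matrix (Fin n) (Fin n) ℂ), (∀ k, B k * f = f * A k) →
      Module.finrank ℂ (LinearMap.ker f.mulVecLin) = d → False := by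
    intro d
    induction d using Nat.strong_induction_on with
    | _ d ih =>
      intro f hf hd
      obtain ⟨f₂, h1, h2⟩ := step A B htr f hf (hcon f hf)
      exact ih _ (hd ▸ Submodule.finrank_lt_finrank_of_lt h2) f₂ h1 rfl
  exact key _ 0 (by simp) rfl

end Accept

/-- For every `n ≥ 1`, the group `SL_n(ℂ)` is acceptable: any two pointwise (locally)
conjugate homomorphisms from a finite group into `SL_n(ℂ)` are globally conjugate. -/
theorem statement10 (n : ℕ) (hn : 1 ≤ n) (Γ : Type) [Group Γ] [Finite Γ]
    (φ φ' : Γ →* Matrix.SpecialLinearGroup (Fin n) ℂ)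
    (hloc : ∀ γ : Γ, ∃ g : Matrix.SpecialLinearGroup (Fin n) ℂ, φ' γ = g * φ γ * g⁻¹) :
    ∃ g : Matrix.SpecialLinearGroup (Fin n) ℂ, ∀ γ : Γ, φ' γ = g * φ γ * g⁻¹ := by
  have := Fintype.ofFinite Γ
  let ι : Matrix.SpecialLinearGroup (Fin n) ℂ →* Matrix (Fin n) (Fin n) ℂ :=
    { toFun := fun g => g.1, map_one' := rfl, map_mul' := fun _ _ => rfl }
  obtain ⟨f, hf, hd⟩ := Accept.exists_inv (ι.comp φ) (ι.comp φ') (fun k => by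
    obtain ⟨g, hg⟩ := hloc k
    rw [MonoidHom.comp_apply, MonoidHom.comp_apply, hg, map_mul, Matrix.trace_mul_comm,
      ← map_mul]
    congr 2
    group)
  obtain ⟨z, hz⟩ := IsAlgClosed.exists_pow_nat_eq f.det (n := n) (by omega)
  have hz0 : z ^ n ≠ 0 := hz ▸ hd
  refine ⟨⟨z⁻¹ • f, ?_⟩, fun k => ?_⟩
  · rw [Matrix.det_smul, Fintype.card_fin, ← hz, inv_pow, inv_mul_cancel₀ hz0]
  · refine eq_mul_inv_iff_mul_eq.2 ?_
    apply Subtype.ext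
    have h := hf k
    change (φ' k).1 * f = f * (φ k).1 at h
    change (φ' k).1 * (z⁻¹ • f) = (z⁻¹ • f) * (φ k).1
    rw [Matrix.mul_smul, Matrix.smul_mul, h]

end
end

section
/- For every n ≥ 1, the complex symplectic group Sp_{2n}(ℂ) := {M ∈ GL_{2n}(ℂ) : Mᵀ J M = J}, where J is the standard symplectic form matrix (J = [[0, I_n],[−I_n, 0]] in block form), is acceptable: for every finite group Γ and homomorphisms φ, φ' : Γ → Sp_{2n}(ℂ) that are pointwise conjugate in Sp_{2n}(ℂ), there exists g ∈ Sp_{2n}(ℂ) conjugating φ to φ'. -/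
open Matrix

noncomputable section

/-- The standard symplectic form matrix `J = [[0, I_n], [−I_n, 0]]` in block form,
indexed by `Fin n ⊕ Fin n`. -/
def Jmat (n : ℕ) : Matrix (Fin n ⊕ Fin n) (Fin n ⊕ Fin n) ℂ :=
  Matrix.fromBlocks 0 1 (-1) 0

/-- Membership in `Sp_{2n}(ℂ) = {M ∈ GL_{2n}(ℂ) : Mᵀ J M = J}`. -/
def memSp (n : ℕ) (g : Matrix (Fin n ⊕ Fin n) (Fin n ⊕ Fin n) ℂ) : Prop :=
  gᵀ * Jmat n * g = Jmat n

open Polynomial in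
theorem aux_sqrt_poly (s : Multiset ℂ) (hs : (0:ℂ) ∉ s) :
    ∃ p : ℂ[X], (s.map (fun a => X - C a)).prod ∣ p ^ 2 - X := by
  induction s using Multiset.induction_on with
  | empty => exact ⟨0, by simp⟩
  | cons a s ih =>
    simp only [Multiset.mem_cons, not_or] at hs
    obtain ⟨p, r, hr⟩ := ih hs.2
    set q := (s.map (fun a => X - C a)).prod with hq
    have key : ∃ c : ℂ, q.eval a * c ^ 2 + 2 * p.eval a * c + r.eval a = 0 := by
      by_cases h : q.eval a = 0
      · have h1 : p.eval a ^ 2 = a := by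
          have := congrArg (eval a) hr
          simp [h] at this
          linear_combination this
        have h2 : p.eval a ≠ 0 := by
          intro h0
          apply hs.1
          rw [← h1, h0]; simp
        refine ⟨- r.eval a / (2 * p.eval a), ?_⟩
        rw [h]; field_simp; ring
      · obtain ⟨d, hd⟩ := IsAlgClosed.exists_pow_nat_eq
          (p.eval a ^ 2 - q.eval a * r.eval a) (n := 2) (by norm_num)
        refine ⟨(d - p.eval a) / q.eval a, ?_⟩
        field_simp
        linear_combination hd
    obtain ⟨c, hc⟩ := key
    have : (X - C a) ∣ r + 2 * C c * p + C c ^ 2 * q := by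
      rw [dvd_iff_isRoot]
      simp only [IsRoot, eval_add, eval_mul, eval_pow, eval_C, eval_ofNat]
      linear_combination hc
    obtain ⟨t, ht⟩ := this
    refine ⟨p + C c * q, t, ?_⟩
    rw [Multiset.map_cons, Multiset.prod_cons]
    linear_combination hr + q * ht

open Polynomial in
theorem aux_sqrt_mat {m : Type*} [Fintype m] [DecidableEq m] (S : Matrix m m ℂ)
    (hS : IsUnit S) : ∃ p : ℂ[X], aeval S p * aeval S p = S := by
  have h0 : (0:ℂ) ∉ S.charpoly.roots := by
    intro h
    rw [mem_roots S.charpoly_monic.ne_zero, IsRoot, Matrix.eval_charpoly] at h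
    have h2 := (Matrix.isUnit_iff_isUnit_det S).1 hS
    simp [Matrix.det_neg] at h
    exact h2.ne_zero h
  obtain ⟨p, hp⟩ := aux_sqrt_poly _ h0
  have hsp := IsAlgClosed.splits S.charpoly
  have h1 : S.charpoly = (S.charpoly.roots.map (fun a => X - C a)).prod := by
    exact hsp.eq_prod_roots_of_monic S.charpoly_monic
  rw [← h1] at hp
  obtain ⟨r, hr⟩ := hp
  refine ⟨p, ?_⟩
  have := congrArg (aeval S) hr
  rw [map_mul, Matrix.aeval_self_charpoly, zero_mul, map_sub, aeval_X, map_pow, pow_two] at this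
  exact sub_eq_zero.1 this

open Polynomial in
theorem aux_semiconj {m : Type*} [Fintype m] [DecidableEq m] (S T K : Matrix m m ℂ)
    (h : T * K = K * S) (p : ℂ[X]) : aeval T p * K = K * aeval S p := by
  induction p using Polynomial.induction_on' with
  | add p q hp hq => simp [add_mul, mul_add, hp, hq]
  | monomial n a =>
    have : T ^ n * K = K * S ^ n := by
      induction n with
      | zero => simp
      | succ n ih => rw [pow_succ, mul_assoc, h, ← mul_assoc, ih, mul_assoc, pow_succ]
    simp only [aeval_monomial, Algebra.algebraMap_eq_smul_one, smul_mul_assoc, one_mul,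
      mul_smul_comm, this]

open Polynomial in
theorem aux_transpose {m : Type*} [Fintype m] [DecidableEq m] (S : Matrix m m ℂ)
    (p : ℂ[X]) : (aeval S p)ᵀ = aeval Sᵀ p := by
  induction p using Polynomial.induction_on' with
  | add p q hp hq => simp [hp, hq]
  | monomial n a =>
    simp only [aeval_monomial, Algebra.algebraMap_eq_smul_one, smul_mul_assoc, one_mul,
      Matrix.transpose_smul, Matrix.transpose_pow]

/-- two-sided multiplication operator -/
def auxLR {m : Type*} [Fintype m] [DecidableEq m] (A B : Matrix m m ℂ) :
    Matrix m m ℂ →ₗ[ℂ] Matrix m m ℂ :=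
  LinearMap.mulLeft ℂ A ∘ₗ LinearMap.mulRight ℂ B

theorem auxLR_apply {m : Type*} [Fintype m] [DecidableEq m] (A B M : Matrix m m ℂ) :
    auxLR A B M = A * M * B := by
  simp [auxLR, mul_assoc]

theorem auxLR_trace {m : Type*} [Fintype m] [DecidableEq m] (A B : Matrix m m ℂ) :
    LinearMap.trace ℂ _ (auxLR A B) = A.trace * B.trace := by
  rw [LinearMap.trace_eq_matrix_trace ℂ (Matrix.stdBasis ℂ m m)]
  simp only [Matrix.trace, Matrix.diag, LinearMap.toMatrix_apply, auxLR_apply,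
    Fintype.sum_prod_type, Finset.sum_mul_sum]
  refine Finset.sum_congr rfl fun i _ => Finset.sum_congr rfl fun j _ => ?_
  rw [Matrix.stdBasis_eq_single]
  have : ∀ M : Matrix m m ℂ, (Matrix.stdBasis ℂ m m).repr M (i, j) = M i j := by
    intro M
    simp [Matrix.stdBasis]
  rw [this]
  rw [Matrix.mul_apply, Finset.sum_eq_single j]
  · rw [Matrix.mul_single_apply_same, mul_one]
  · intro k _ hk
    rw [Matrix.mul_single_apply_of_ne _ _ _ _ _ hk, zero_mul]
  · simp

theorem aux_invol {Γ : Type} [Group Γ] {m : Type*} [Fintype m] [DecidableEq m]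
    (φ : Γ →* Matrix m m ℂ) (γ : Γ) : φ γ⁻¹ * φ γ = 1 := by
  rw [← map_mul, inv_mul_cancel, map_one]

/-- nonvanishing of the norm of the character of an idempotent -/
theorem aux_norm_ne {Γ : Type} [Group Γ] [Fintype Γ] {m : Type*} [Fintype m] [DecidableEq m]
    (φ : Γ →* Matrix m m ℂ) (P : Matrix m m ℂ) (hP : P * P = P) (hP0 : P ≠ 0)
    (hc : ∀ γ, P * φ γ = φ γ * P) :
    ∑ γ, (φ γ * P).trace * (P * φ γ⁻¹).trace ≠ 0 := by
  intro h
  set T : Matrix m m ℂ →ₗ[ℂ] Matrix m m ℂ :=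
    (Fintype.card Γ : ℂ)⁻¹ • ∑ γ, auxLR (φ γ * P) (P * φ γ⁻¹) with hT
  have hcard : (Fintype.card Γ : ℂ) ≠ 0 := by simp
  have happ : ∀ M, T M = (Fintype.card Γ : ℂ)⁻¹ • ∑ γ, φ γ * P * M * (P * φ γ⁻¹) := by
    intro M
    simp [hT, LinearMap.sum_apply, auxLR_apply]
  have hfix : ∀ M, (∀ γ, φ γ * M = M * φ γ) → P * M = M → M * P = M → T M = M := by
    intro M h1 h2 h3
    rw [happ]
    have : ∀ γ, φ γ * P * M * (P * φ γ⁻¹) = M := by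
      intro γ
      calc φ γ * P * M * (P * φ γ⁻¹) = φ γ * (P * M) * P * φ γ⁻¹ := by simp only [mul_assoc]
        _ = φ γ * (M * P) * φ γ⁻¹ := by rw [h2]; simp only [mul_assoc]
        _ = M := by rw [h3, h1, mul_assoc, ← map_mul, mul_inv_cancel, map_one, mul_one]
    simp only [this, Finset.sum_const, Finset.card_univ]
    rw [← Nat.cast_smul_eq_nsmul ℂ, smul_smul, inv_mul_cancel₀ hcard, one_smul]
  have hT1 : ∀ M γ, φ γ * T M = T M * φ γ := by
    intro M γ
    rw [happ]
    simp only [mul_smul_comm, smul_mul_assoc, Finset.mul_sum, Finset.sum_mul]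
    congr 1
    refine Fintype.sum_equiv (Equiv.mulLeft γ) _ _ fun δ => ?_
    simp only [Equiv.coe_mulLeft, _root_.mul_inv_rev, map_mul, mul_assoc, aux_invol, mul_one]
  have hT2 : ∀ M, P * T M = T M := by
    intro M
    rw [happ]
    simp only [mul_smul_comm, Finset.mul_sum]
    congr 1
    refine Finset.sum_congr rfl fun γ _ => ?_
    simp only [← mul_assoc]
    rw [hc, mul_assoc (φ γ) P P, hP]
  have hT3 : ∀ M, T M * P = T M := by
    intro M
    rw [happ]
    simp only [smul_mul_assoc, Finset.sum_mul]
    congr 1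
    refine Finset.sum_congr rfl fun γ _ => ?_
    simp only [mul_assoc]
    rw [← hc, ← mul_assoc P P, hP]
  have hid : IsIdempotentElem T := by
    apply LinearMap.ext
    intro M
    exact hfix (T M) (hT1 M) (hT2 M) (hT3 M)
  have htr : LinearMap.trace ℂ _ T = 0 := by
    simp only [hT, map_smul, map_sum, auxLR_trace, h, smul_zero]
  have hproj := LinearMap.IsIdempotentElem.isProj_range T hid
  rw [hproj.trace] at htr
  have h0 : Module.finrank ℂ (LinearMap.range T) = 0 := by exact_mod_cast htr
  rw [Submodule.finrank_eq_zero, LinearMap.range_eq_bot] at h0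
  have := hfix P (fun γ => (hc γ).symm) hP hP
  rw [h0] at this
  exact hP0 this.symm

theorem aux_geninv {m : Type*} [Fintype m] [DecidableEq m] (X : Matrix m m ℂ) :
    ∃ Y : Matrix m m ℂ, X * Y * X = X := by
  obtain ⟨f, hf⟩ := LinearMap.exists_leftInverse_of_injective
    (K := ℂ) (LinearMap.range (Matrix.toLin' X)).subtype (by simp)
  obtain ⟨g, hg⟩ := LinearMap.exists_rightInverse_of_surjective
    (Matrix.toLin' X).rangeRestrict (by simp)
  refine ⟨LinearMap.toMatrix' (g ∘ₗ f), ?_⟩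
  apply Matrix.toLin'.injective
  rw [Matrix.toLin'_mul, Matrix.toLin'_mul, Matrix.toLin'_toMatrix']
  apply LinearMap.ext
  intro v
  have h1 : f (Matrix.toLin' X v) = (Matrix.toLin' X).rangeRestrict v :=
    LinearMap.congr_fun hf ((Matrix.toLin' X).rangeRestrict v)
  have h2 := congrArg Subtype.val
    (LinearMap.congr_fun hg ((Matrix.toLin' X).rangeRestrict v))
  simp only [LinearMap.comp_apply]
  rw [h1]
  exact h2

theorem aux_iso {Γ : Type} [Group Γ] [Fintype Γ] {m : Type*} [Fintype m] [DecidableEq m]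
    (φ φ' : Γ →* Matrix m m ℂ) (htr : ∀ γ, (φ γ).trace = (φ' γ).trace) :
    ∃ A : Matrix m m ℂ, IsUnit A ∧ ∀ γ, φ' γ * A = A * φ γ := by
  have hcard : (Fintype.card Γ : ℂ) ≠ 0 := by simp
  have hex : ∃ k : ℕ, ∃ X : Matrix m m ℂ, (∀ γ, φ' γ * X = X * φ γ) ∧
      Module.finrank ℂ (LinearMap.ker (Matrix.toLin' X)) = k := ⟨_, 0, by simp, rfl⟩
  classical
  obtain ⟨X, hX, hk⟩ := Nat.find_spec hex
  have hmin : ∀ Z : Matrix m m ℂ, (∀ γ, φ' γ * Z = Z * φ γ) →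
      ¬ (Module.finrank ℂ (LinearMap.ker (Matrix.toLin' Z)) <
        Module.finrank ℂ (LinearMap.ker (Matrix.toLin' X))) := by
    intro Z hZ hlt
    rw [hk] at hlt
    exact Nat.find_min hex hlt ⟨Z, hZ, rfl⟩
  obtain ⟨Y0, hY0⟩ := aux_geninv X
  set Y : Matrix m m ℂ := (Fintype.card Γ : ℂ)⁻¹ • ∑ γ, φ γ * Y0 * φ' γ⁻¹ with hYdef
  have hY : ∀ γ, φ γ * Y = Y * φ' γ := by
    intro γ
    rw [hYdef]
    simp only [mul_smul_comm, smul_mul_assoc, Finset.mul_sum, Finset.sum_mul]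
    congr 1
    refine Fintype.sum_equiv (Equiv.mulLeft γ) _ _ fun δ => ?_
    simp only [Equiv.coe_mulLeft, _root_.mul_inv_rev, map_mul, mul_assoc, aux_invol, mul_one]
  have hXYX : X * Y * X = X := by
    rw [hYdef]
    simp only [mul_smul_comm, smul_mul_assoc, Finset.mul_sum, Finset.sum_mul]
    have : ∀ γ, X * (φ γ * Y0 * φ' γ⁻¹) * X = X := by
      intro γ
      calc X * (φ γ * Y0 * φ' γ⁻¹) * X = (X * φ γ) * Y0 * (φ' γ⁻¹ * X) := by
            simp only [mul_assoc]
        _ = φ' γ * (X * Y0 * X) * φ γ⁻¹ := by rw [← hX, hX γ⁻¹]; simp only [mul_assoc]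
        _ = X := by
            rw [hY0, hX, mul_assoc, ← map_mul, mul_inv_cancel, map_one, mul_one]
    simp only [this, Finset.sum_const, Finset.card_univ]
    rw [← Nat.cast_smul_eq_nsmul ℂ, smul_smul, inv_mul_cancel₀ hcard, one_smul]
  by_cases hP0 : 1 - Y * X = 0
  · refine ⟨X, ?_, hX⟩
    have h1 : Y * X = 1 := (sub_eq_zero.1 hP0).symm
    exact IsUnit.of_mul_eq_one_right Y h1
  exfalso
  set P := 1 - Y * X with hPdef
  set Q := 1 - X * Y with hQdef
  have hP : P * P = P := by
    have : Y * X * (Y * X) = Y * X := by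
      rw [mul_assoc Y X, ← mul_assoc X Y X, hXYX]
    rw [hPdef, sub_mul, one_mul, mul_sub, mul_one, this]; simp
  have hPc : ∀ γ, P * φ γ = φ γ * P := by
    intro γ
    rw [hPdef, sub_mul, mul_sub, one_mul, mul_one, mul_assoc, ← hX, ← mul_assoc, ← hY, mul_assoc]
  have hQc : ∀ γ, Q * φ' γ = φ' γ * Q := by
    intro γ
    rw [hQdef, sub_mul, mul_sub, one_mul, mul_one, mul_assoc, ← hY, ← mul_assoc, ← hX, mul_assoc]
  have hXP : X * P = 0 := by
    rw [hPdef, mul_sub, mul_one, ← mul_assoc, hXYX, sub_self]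
  have hQX : Q * X = 0 := by
    rw [hQdef, sub_mul, one_mul, hXYX, sub_self]
  have hXYQ : X * Y * Q = 0 := by
    rw [hQdef, mul_sub, mul_one, ← mul_assoc, hXYX, sub_self]
  have htrPQ : ∀ γ, (φ' γ * Q).trace = (φ γ * P).trace := by
    intro γ
    rw [hPdef, hQdef, mul_sub, mul_sub, mul_one, mul_one, Matrix.trace_sub, Matrix.trace_sub,
      htr, ← mul_assoc, hX, mul_assoc, Matrix.trace_mul_comm X, ← mul_assoc]
  have hne := aux_norm_ne φ P hP hP0 hPc
  have hZ0 : ∃ M : Matrix m m ℂ, ∑ γ, φ' γ * Q * M * (P * φ γ⁻¹) ≠ 0 := by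
    by_contra! hall
    have hT : ∑ γ, auxLR (φ' γ * Q) (P * φ γ⁻¹) = 0 := by
      apply LinearMap.ext
      intro M
      simp [LinearMap.sum_apply, auxLR_apply, hall]
    have := congrArg (LinearMap.trace ℂ _) hT
    simp only [map_sum, auxLR_trace, htrPQ, map_zero] at this
    exact hne this
  obtain ⟨M, hM⟩ := hZ0
  set Z := ∑ γ, φ' γ * Q * M * (P * φ γ⁻¹) with hZdef
  have hZ : ∀ γ, φ' γ * Z = Z * φ γ := by
    intro γ
    rw [hZdef]
    simp only [Finset.mul_sum, Finset.sum_mul]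
    refine Fintype.sum_equiv (Equiv.mulLeft γ) _ _ fun δ => ?_
    simp only [Equiv.coe_mulLeft, _root_.mul_inv_rev, map_mul, mul_assoc, aux_invol, mul_one]
  have hXYZ : X * Y * Z = 0 := by
    rw [hZdef]
    simp only [Finset.mul_sum]
    refine Finset.sum_eq_zero fun γ _ => ?_
    rw [← hQc]
    simp only [← mul_assoc]
    rw [hXYQ]; simp
  have hZP : Z * P = Z := by
    rw [hZdef]
    simp only [Finset.sum_mul]
    refine Finset.sum_congr rfl fun γ _ => ?_
    simp only [mul_assoc]
    rw [← hPc, ← mul_assoc P P, hP]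
  refine hmin (X + Z) (fun γ => by rw [mul_add, add_mul, hX, hZ]) ?_
  apply Submodule.finrank_lt_finrank_of_lt
  have hkerX : ∀ v, (X + Z) *ᵥ v = 0 → X *ᵥ v = 0 := by
    intro v hv
    have := congrArg (fun w => (X * Y) *ᵥ w) hv
    simp only [Matrix.mulVec_mulVec, mul_add, hXYX, hXYZ, add_zero, Matrix.mulVec_zero] at this
    exact this
  refine lt_of_le_of_ne ?_ ?_
  · intro v hv
    rw [LinearMap.mem_ker, Matrix.toLin'_apply] at hv ⊢
    exact hkerX v hv
  · intro heq
    apply hM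
    rw [← hZP]
    apply Matrix.toLin'.injective
    apply LinearMap.ext
    intro v
    have h1 : P *ᵥ v ∈ LinearMap.ker (Matrix.toLin' X) := by
      rw [LinearMap.mem_ker, Matrix.toLin'_apply, Matrix.mulVec_mulVec, hXP, Matrix.zero_mulVec]
    have h2 := h1
    rw [← heq] at h2
    rw [LinearMap.mem_ker, Matrix.toLin'_apply] at h1 h2
    rw [Matrix.add_mulVec, h1, zero_add, Matrix.mulVec_mulVec] at h2
    simpa using h2

theorem aux_JJ (n : ℕ) : Jmat n * Jmat n = -1 := by
  rw [Jmat, Matrix.fromBlocks_multiply, ← Matrix.fromBlocks_one, Matrix.fromBlocks_neg]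
  simp

theorem aux_JT (n : ℕ) : (Jmat n)ᵀ = - Jmat n := by
  rw [Jmat, Matrix.fromBlocks_transpose, Matrix.fromBlocks_neg]
  simp

/-- For every `n ≥ 1`, the complex symplectic group `Sp_{2n}(ℂ)` is acceptable: any two
pointwise (locally) conjugate homomorphisms from a finite group into `Sp_{2n}(ℂ)` are
globally conjugate.  (Group homomorphisms into `Sp_{2n}(ℂ)` are encoded as monoid
homomorphisms into the multiplicative monoid of matrices landing in `Sp_{2n}(ℂ)`.) -/
theorem statement11 (n : ℕ) (hn : 1 ≤ n) (Γ : Type) [Group Γ] [Finite Γ]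
    (φ φ' : Γ →* Matrix (Fin n ⊕ Fin n) (Fin n ⊕ Fin n) ℂ)
    (hφ : ∀ γ, memSp n (φ γ)) (hφ' : ∀ γ, memSp n (φ' γ))
    (hloc : ∀ γ : Γ, ∃ g : Matrix (Fin n ⊕ Fin n) (Fin n ⊕ Fin n) ℂ,
      memSp n g ∧ φ' γ = g * φ γ * g⁻¹) :
    ∃ g : Matrix (Fin n ⊕ Fin n) (Fin n ⊕ Fin n) ℂ,
      memSp n g ∧ ∀ γ : Γ, φ' γ = g * φ γ * g⁻¹ := by
  have := Fintype.ofFinite Γ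
  have hJJ := aux_JJ n
  have hJT := aux_JT n
  have hunit : ∀ g, memSp n g → IsUnit g := by
    intro g hg
    refine IsUnit.of_mul_eq_one_right (-(Jmat n * gᵀ * Jmat n)) ?_
    unfold memSp at hg
    rw [neg_mul, mul_assoc (Jmat n), mul_assoc (Jmat n), hg, hJJ, neg_neg]
  obtain ⟨A, hA, hAφ⟩ := aux_iso φ φ' (by
    intro γ
    obtain ⟨g, hg, h⟩ := hloc γ
    have hd := (Matrix.isUnit_iff_isUnit_det g).1 (hunit g hg)
    rw [h, Matrix.trace_mul_comm, ← mul_assoc, Matrix.nonsing_inv_mul g hd, one_mul])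
  have hsw : ∀ ψ : Γ →* Matrix (Fin n ⊕ Fin n) (Fin n ⊕ Fin n) ℂ, (∀ γ, memSp n (ψ γ)) →
      ∀ γ, (ψ γ⁻¹)ᵀ * Jmat n = Jmat n * ψ γ := by
    intro ψ h γ
    have h1 := h γ⁻¹
    unfold memSp at h1
    calc (ψ γ⁻¹)ᵀ * Jmat n = ((ψ γ⁻¹)ᵀ * Jmat n * ψ γ⁻¹) * ψ γ := by
          rw [mul_assoc _ (ψ γ⁻¹), aux_invol, mul_one]
      _ = _ := by rw [h1]
  set S := -(Jmat n * (Aᵀ * Jmat n * A)) with hS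
  have hJS : Jmat n * S = Aᵀ * Jmat n * A := by
    rw [hS, mul_neg, ← mul_assoc, hJJ]; simp
  have hST : Sᵀ * Jmat n = Jmat n * S := by
    rw [hJS, hS]
    simp only [Matrix.transpose_neg, Matrix.transpose_mul, Matrix.transpose_transpose, hJT]
    simp only [neg_mul, mul_neg, neg_neg, mul_assoc, hJJ, mul_one]
  have hJu : IsUnit (Jmat n) :=
    IsUnit.of_mul_eq_one_right (-(Jmat n)) (by rw [neg_mul, hJJ, neg_neg])
  have hAT : IsUnit Aᵀ := (Matrix.isUnit_transpose A).2 hA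
  have hSu : IsUnit S := (hJu.mul ((hAT.mul hJu).mul hA)).neg
  have hSφ : ∀ γ, S * φ γ = φ γ * S := by
    intro γ
    apply hJu.mul_left_cancel
    have e1 : Aᵀ * (φ' γ⁻¹)ᵀ = (φ γ⁻¹)ᵀ * Aᵀ := by
      rw [← Matrix.transpose_mul, hAφ, Matrix.transpose_mul]
    calc Jmat n * (S * φ γ) = Aᵀ * Jmat n * (A * φ γ) := by
          rw [← mul_assoc, hJS, mul_assoc _ A]
      _ = Aᵀ * (Jmat n * φ' γ) * A := by rw [← hAφ]; simp only [mul_assoc]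
      _ = (Aᵀ * (φ' γ⁻¹)ᵀ) * Jmat n * A := by rw [← hsw φ' hφ']; simp only [mul_assoc]
      _ = (φ γ⁻¹)ᵀ * (Aᵀ * Jmat n * A) := by rw [e1]; simp only [mul_assoc]
      _ = Jmat n * (φ γ * S) := by rw [← hJS, ← mul_assoc, hsw φ hφ, mul_assoc]
  obtain ⟨p, hp⟩ := aux_sqrt_mat S hSu
  have hRJ := aux_semiconj S Sᵀ (Jmat n) hST p
  have hRφ := fun γ => aux_semiconj S S (φ γ) (hSφ γ) p
  have hRT : (Polynomial.aeval S p)ᵀ = Polynomial.aeval Sᵀ p := by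
    exact aux_transpose S p
  rw [← hRT] at hRJ
  set R := Polynomial.aeval S p with hR
  have hRu : IsUnit R := by
    have : IsUnit (R * R) := by rw [hp]; exact hSu
    rw [Matrix.isUnit_iff_isUnit_det] at this ⊢
    rw [Matrix.det_mul] at this
    exact isUnit_of_mul_isUnit_left this
  have hRd := (Matrix.isUnit_iff_isUnit_det R).1 hRu
  have hAd := (Matrix.isUnit_iff_isUnit_det A).1 hA
  refine ⟨A * R⁻¹, ?_, ?_⟩
  · unfold memSp
    calc (A * R⁻¹)ᵀ * Jmat n * (A * R⁻¹) = (R⁻¹)ᵀ * (Aᵀ * Jmat n * A) * R⁻¹ := by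
          rw [Matrix.transpose_mul]; simp only [mul_assoc]
      _ = (R⁻¹)ᵀ * (Jmat n * R) * (R * R⁻¹) := by
          rw [← hJS, ← hp]; simp only [mul_assoc]
      _ = (R * R⁻¹)ᵀ * Jmat n := by
          rw [Matrix.mul_nonsing_inv R hRd, mul_one, ← hRJ, ← mul_assoc, ← Matrix.transpose_mul,
            Matrix.mul_nonsing_inv R hRd]
      _ = Jmat n := by rw [Matrix.mul_nonsing_inv R hRd]; simp
  · intro γ
    rw [Matrix.mul_inv_rev, Matrix.nonsing_inv_nonsing_inv R hRd]
    have : R⁻¹ * φ γ * R = φ γ := by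
      rw [mul_assoc, ← hRφ, ← mul_assoc, Matrix.nonsing_inv_mul R hRd, one_mul]
    calc φ' γ = φ' γ * A * A⁻¹ := by rw [mul_assoc, Matrix.mul_nonsing_inv A hAd, mul_one]
      _ = A * (R⁻¹ * φ γ * R) * A⁻¹ := by rw [this, hAφ]
      _ = _ := by simp only [mul_assoc]

end
end

section
/- The group SO₄(ℂ) := {M ∈ GL₄(ℂ) : Mᵀ M = 1 and det M = 1} is acceptable: for every finite group Γ and homomorphisms φ, φ' : Γ → SO₄(ℂ) that are pointwise conjugate in SO₄(ℂ), there exists g ∈ SO₄(ℂ) conjugating φ to φ'. -/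
open Matrix

noncomputable section

/-- Membership in `SO_m(ℂ) = {M ∈ GL_m(ℂ) : Mᵀ M = 1 and det M = 1}`. -/
def memSO (m : ℕ) (g : Matrix (Fin m) (Fin m) ℂ) : Prop :=
  gᵀ * g = 1 ∧ g.det = 1


theorem rep_split {G V : Type} [Group G] [Finite G] [AddCommGroup V] [Module ℂ V]
    (ρ : Representation ℂ G V) (U : Subrepresentation ρ) :
    ∃ U' : Subrepresentation ρ,
      Nonempty (Representation.Equiv (U.toRepresentation.prod U'.toRepresentation) ρ) := by
  have : NeZero (Nat.card G : ℂ) := ⟨by exact_mod_cast Nat.card_pos.ne'⟩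
  have hs : Representation.IsSemisimpleRepresentation ρ := inferInstance
  obtain ⟨U', hU'⟩ := hs.exists_isCompl U
  have hc : IsCompl U.toSubmodule U'.toSubmodule := by
    refine ⟨disjoint_iff.2 ?_, codisjoint_iff.2 ?_⟩
    · rw [← Subrepresentation.toSubmodule_inf, hU'.inf_eq_bot]; rfl
    · rw [← Subrepresentation.toSubmodule_sup, hU'.sup_eq_top]; rfl
  refine ⟨U', ⟨Representation.Equiv.mk (Submodule.prodEquivOfIsCompl _ _ hc) ?_⟩⟩
  intro g
  ext v <;> simp [Representation.prod, Subrepresentation.toRepresentation]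

theorem char_prod' {G V W : Type} [Group G] [AddCommGroup V] [Module ℂ V] [FiniteDimensional ℂ V]
    [AddCommGroup W] [Module ℂ W] [FiniteDimensional ℂ W]
    (ρ : Representation ℂ G V) (σ : Representation ℂ G W) (g : G) :
    (ρ.prod σ).character g = ρ.character g + σ.character g := 
  LinearMap.trace_prodMap' _ _

theorem rep_iso_of_char {G : Type} [Group G] [Finite G] (n : ℕ) :
    ∀ (V W : Type) [AddCommGroup V] [Module ℂ V] [FiniteDimensional ℂ V]
    [AddCommGroup W] [Module ℂ W] [FiniteDimensional ℂ W]
    (ρ : Representation ℂ G V) (σ : Representation ℂ G W),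
    Module.finrank ℂ V = n → ρ.character = σ.character →
    ∃ e : V ≃ₗ[ℂ] W, ∀ g v, e (ρ g v) = σ g (e v) := by
  induction n using Nat.strong_induction_on with
  | _ n ih =>
  intro V W _ _ _ _ _ _ ρ σ hn hχ
  have hdim : Module.finrank ℂ V = Module.finrank ℂ W := by
    have := congrFun hχ 1
    simpa using this
  by_cases h0 : n = 0
  · subst h0
    have : Subsingleton V := Module.finrank_zero_iff.1 hn
    have : Subsingleton W := Module.finrank_zero_iff.1 (hdim ▸ hn)
    exact ⟨LinearEquiv.ofFinrankEq V W hdim, fun g v => Subsingleton.elim _ _⟩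
  have hex : ∃ m, ∃ U : Subrepresentation ρ, U.toSubmodule ≠ ⊥ ∧ Module.finrank ℂ U.toSubmodule = m := by
    refine ⟨_, ⊤, ?_, rfl⟩
    change (⊤ : Submodule ℂ V) ≠ ⊥
    have : Nontrivial V := (Module.finrank_pos_iff (R := ℂ)).1 (by omega)
    exact top_ne_bot
  classical
  obtain ⟨U, hU, hUm⟩ := Nat.find_spec hex
  have hmin : ∀ U' : Subrepresentation ρ, U'.toSubmodule ≠ ⊥ → 
      Module.finrank ℂ U.toSubmodule ≤ Module.finrank ℂ U'.toSubmodule := by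
    intro U' h
    rw [hUm]
    exact Nat.find_min' hex ⟨U', h, rfl⟩
  have := Fintype.ofFinite G
  have hG : (Nat.card G : ℂ) ≠ 0 := by simp
  have : Invertible (Nat.card G : ℂ) := invertibleOfNonzero hG
  set τ := U.toRepresentation with hτ
  have hfr : Module.finrank ℂ (Representation.IntertwiningMap τ ρ)
      = Module.finrank ℂ (Representation.IntertwiningMap τ σ) := by
    have h1 := Representation.card_inv_mul_sum_char_mul_char_eq_finrank τ ρ
    have h2 := Representation.card_inv_mul_sum_char_mul_char_eq_finrank τ σ
    rw [hχ, h2] at h1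
    exact_mod_cast h1.symm
  have : FiniteDimensional ℂ (Representation.IntertwiningMap τ ρ) :=
    Module.Finite.equiv (Representation.invariantsEquivIntertwiningMap τ ρ)
  let ι : Representation.IntertwiningMap τ ρ := ⟨U.toSubmodule.subtype, fun g => by
    ext v; rfl⟩
  have hι : ι ≠ 0 := by
    intro h
    obtain ⟨x, hx, hx0⟩ := Submodule.exists_mem_ne_zero_of_ne_bot hU
    apply hx0
    have : ι ⟨x, hx⟩ = 0 := by rw [h]; rfl
    exact this
  have hpos : 0 < Module.finrank ℂ (Representation.IntertwiningMap τ ρ) :=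
    Module.finrank_pos_iff_exists_ne_zero.2 ⟨ι, hι⟩
  rw [hfr] at hpos
  have := Module.nontrivial_of_finrank_pos hpos
  obtain ⟨f, hf⟩ := exists_ne (0 : Representation.IntertwiningMap τ σ)
  have hfi : ∀ g v, f (τ g v) = σ g (f v) := fun g v => Representation.IntertwiningMap.isIntertwining _ _ f g v
  have hker : LinearMap.ker f.toLinearMap = ⊥ := by
    by_contra hk
    let K : Subrepresentation ρ := ⟨(LinearMap.ker f.toLinearMap).map U.toSubmodule.subtype, by
      rintro g v ⟨x, hx, rfl⟩
      refine ⟨τ g x, ?_, rfl⟩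
      have hx' : f x = 0 := hx
      change f (τ g x) = 0
      rw [hfi, hx', map_zero]⟩
    have h1 := hmin K (by
      intro h
      apply hk
      exact Submodule.map_injective_of_injective (Submodule.injective_subtype _) (h.trans (Submodule.map_bot _).symm))
    have h2 : Module.finrank ℂ K.toSubmodule = Module.finrank ℂ (LinearMap.ker f.toLinearMap) := 
      Submodule.finrank_map_subtype_eq _ _
    rw [h2] at h1
    have h3 : LinearMap.ker f.toLinearMap = ⊤ :=
      Submodule.eq_top_of_finrank_eq (le_antisymm (Submodule.finrank_le _) h1)
    apply hf
    apply Representation.IntertwiningMap.ext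
    exact LinearMap.ker_eq_top.1 h3
  let X : Subrepresentation σ := f.range
  let eUX : U.toSubmodule ≃ₗ[ℂ] X.toSubmodule := LinearEquiv.ofInjective f.toLinearMap (LinearMap.ker_eq_bot.1 hker)
  have heUX : ∀ g v, eUX (τ g v) = X.toRepresentation g (eUX v) := by
    intro g v
    apply Subtype.ext
    exact hfi g v
  have hχ1 : τ.character = X.toRepresentation.character :=
    Representation.char_iso (Representation.Equiv.mk eUX (fun g => by ext v; exact congrArg _ (heUX g v)))
  obtain ⟨U', ⟨eU⟩⟩ := rep_split ρ U
  obtain ⟨X', ⟨eX⟩⟩ := rep_split σ X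
  have hχ2 : U'.toRepresentation.character = X'.toRepresentation.character := by
    ext g
    have h1 := congrFun (Representation.char_iso eU) g
    have h2 := congrFun (Representation.char_iso eX) g
    rw [char_prod'] at h1 h2
    have h3 := congrFun hχ g
    have h4 := congrFun hχ1 g
    linear_combination h1 - h2 + h3 - h4
  have hlt : Module.finrank ℂ U'.toSubmodule < n := by
    have h1 : Module.finrank ℂ U.toSubmodule + Module.finrank ℂ U'.toSubmodule = n := by
      rw [← hn, ← Module.finrank_prod]
      exact LinearEquiv.finrank_eq eU.toLinearEquiv
    have h2 : 0 < Module.finrank ℂ U.toSubmodule := by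
      rw [Module.finrank_pos_iff]
      exact Submodule.nontrivial_iff_ne_bot.2 hU
    omega
  obtain ⟨e', he'⟩ := ih _ hlt _ _ U'.toRepresentation X'.toRepresentation rfl hχ2
  refine ⟨eU.toLinearEquiv.symm ≪≫ₗ (LinearEquiv.prodCongr eUX e') ≪≫ₗ eX.toLinearEquiv, ?_⟩
  intro g v
  obtain ⟨⟨a, b⟩, rfl⟩ := eU.toLinearEquiv.surjective v
  have h1 : ρ g (eU.toLinearEquiv (a,b)) = eU.toLinearEquiv (τ g a, U'.toRepresentation g b) :=
    (Representation.IntertwiningMap.isIntertwining _ _ eU.toIntertwiningMap g (a,b)).symm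
  have h2 : ∀ c d, σ g (eX.toLinearEquiv (c,d)) = eX.toLinearEquiv (X.toRepresentation g c, X'.toRepresentation g d) :=
    fun c d => (Representation.IntertwiningMap.isIntertwining _ _ eX.toIntertwiningMap g (c,d)).symm
  rw [h1]
  simp only [LinearEquiv.trans_apply, LinearEquiv.symm_apply_apply, LinearEquiv.prodCongr_apply]
  rw [h2, heUX, he']

theorem mat_iso_of_trace {G : Type} [Group G] [Finite G] {n : ℕ}
    (ρ σ : G →* Matrix (Fin n) (Fin n) ℂ) (h : ∀ g, (ρ g).trace = (σ g).trace) :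
    ∃ A B : Matrix (Fin n) (Fin n) ℂ, A * B = 1 ∧ ∀ g, A * ρ g = σ g * A := by
  let R : (G →* Matrix (Fin n) (Fin n) ℂ) → Representation ℂ G (Fin n → ℂ) := fun ρ =>
    (Matrix.toLinAlgEquiv' : Matrix (Fin n) (Fin n) ℂ ≃ₐ[ℂ] _).toAlgHom.toRingHom.toMonoidHom.comp ρ
  obtain ⟨e, he⟩ := rep_iso_of_char (G := G) _ _ _ (R ρ) (R σ) rfl (by
    ext g
    have h1 := Matrix.trace_toLin'_eq (ρ g)
    have h2 := Matrix.trace_toLin'_eq (σ g)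
    rw [h g] at h1
    exact h1.trans h2.symm)
  refine ⟨LinearMap.toMatrix' e.toLinearMap, LinearMap.toMatrix' e.symm.toLinearMap, ?_, ?_⟩
  · rw [← LinearMap.toMatrix'_comp]; simp
  · intro g
    apply Matrix.toLin'.injective
    rw [Matrix.toLin'_mul, Matrix.toLin'_mul, Matrix.toLin'_toMatrix']
    exact LinearMap.ext (fun v => he g v)

/-- square root of an invertible matrix as a polynomial -/
theorem exists_sqrt_poly {n : ℕ} (S T : Matrix (Fin n) (Fin n) ℂ) (hST : S * T = 1) :
    ∃ p : Polynomial ℂ, Polynomial.aeval S p * Polynomial.aeval S p = S := by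
  classical
  set χ := S.charpoly with hχ
  have hne : χ ≠ 0 := (Matrix.charpoly_monic S).ne_zero
  have h0 : ∀ a ∈ χ.roots, a ≠ 0 := by
    rintro a ha rfl
    have h1 := (Polynomial.mem_roots hne).1 ha
    have h2 : χ.eval 0 = 0 := h1
    rw [hχ, Matrix.eval_charpoly] at h2
    have h3 : S.det ≠ 0 := fun h => by
      have := congrArg Matrix.det hST
      rw [Matrix.det_mul, h, Matrix.det_one] at this
      simp at this
    apply h3
    simpa [Matrix.det_neg] using h2
  choose r hr using fun z : ℂ => IsAlgClosed.exists_eq_mul_self z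
  let q : Polynomial ℂ := Lagrange.interpolate χ.roots.toFinset id r
  have hq : ∀ a ∈ χ.roots, q.eval a = r a := fun a ha =>
    Lagrange.eval_interpolate_at_node (s := χ.roots.toFinset) (v := id) r (Function.injective_id.injOn) (Multiset.mem_toFinset.2 ha)
  have hsplit : χ = (χ.roots.map (fun a => Polynomial.X - Polynomial.C a)).prod :=
    (IsAlgClosed.splits χ).eq_prod_roots_of_monic (Matrix.charpoly_monic S)
  have hdvd : χ ∣ (q * q - Polynomial.X) ^ (Multiset.card χ.roots) := by
    nth_rw 1 [hsplit]
    rw [← Multiset.prod_replicate, ← Multiset.map_const']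
    apply Multiset.prod_dvd_prod_of_dvd
    intro a ha
    rw [Polynomial.dvd_iff_isRoot]
    simp [hq a ha, ← hr a]
  have hcop : IsCoprime q χ := by
    rw [Polynomial.isCoprime_iff_aeval_ne_zero_of_isAlgClosed (k := ℂ) (K := ℂ)]
    intro a
    by_cases ha : a ∈ χ.roots
    · left
      rw [Polynomial.coe_aeval_eq_eval, hq a ha]
      intro h
      apply h0 a ha
      rw [hr a, h, mul_zero]
    · right
      intro h
      exact ha ((Polynomial.mem_roots hne).2 (by simpa using h))
  let P : Polynomial (AdjoinRoot χ) := Polynomial.X ^ 2 - Polynomial.C (AdjoinRoot.root χ)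
  have hnil : IsNilpotent (Polynomial.aeval (AdjoinRoot.mk χ q) P) := by
    refine ⟨Multiset.card χ.roots, ?_⟩
    have := AdjoinRoot.mk_eq_zero.2 hdvd
    rw [map_pow, map_sub, map_mul, AdjoinRoot.mk_X] at this
    rw [← this]
    simp [P, sq]
  have hunit : IsUnit (Polynomial.aeval (AdjoinRoot.mk χ q) (Polynomial.derivative P)) := by
    obtain ⟨u, v, huv⟩ := hcop
    have h1 := congrArg (AdjoinRoot.mk χ) huv
    rw [map_add, map_mul, map_mul, AdjoinRoot.mk_self, mul_zero, add_zero, map_one] at h1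
    have h2 : IsUnit (AdjoinRoot.mk χ q) := IsUnit.of_mul_eq_one_right _ h1
    have h3 : IsUnit (1 + 1 : AdjoinRoot χ) := by
      have : IsUnit (algebraMap ℂ (AdjoinRoot χ) (1 + 1)) :=
        (IsUnit.mk0 (1 + 1 : ℂ) (by norm_num)).map _
      rwa [map_add, map_one] at this
    simpa [P] using And.intro h3 h2
  obtain ⟨y, ⟨-, hy⟩, -⟩ := Polynomial.existsUnique_nilpotent_sub_and_aeval_eq_zero hnil hunit
  obtain ⟨p, rfl⟩ := AdjoinRoot.mk_surjective y
  refine ⟨p, ?_⟩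
  have h1 : AdjoinRoot.mk χ (p * p - Polynomial.X) = 0 := by
    rw [map_sub, map_mul, AdjoinRoot.mk_X, ← hy]
    simp [P, sq]
  obtain ⟨c, hc⟩ := AdjoinRoot.mk_eq_zero.1 h1
  have h2 := congrArg (Polynomial.aeval S) hc
  rw [map_mul, Matrix.aeval_self_charpoly, zero_mul, map_sub, map_mul, Polynomial.aeval_X] at h2
  exact sub_eq_zero.1 h2

theorem orth_of_iso {G : Type} [Group G] {n : ℕ}
    (ρ σ : G →* Matrix (Fin n) (Fin n) ℂ) (hρ : ∀ g, (ρ g)ᵀ * ρ g = 1) (hσ : ∀ g, (σ g)ᵀ * σ g = 1)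
    (A B : Matrix (Fin n) (Fin n) ℂ) (hAB : A * B = 1) (h : ∀ g, A * ρ g = σ g * A) :
    ∃ g : Matrix (Fin n) (Fin n) ℂ, gᵀ * g = 1 ∧ ∀ γ, g * ρ γ = σ γ * g := by
  have hBA : B * A = 1 := mul_eq_one_comm.1 hAB
  have hS : (Aᵀ * A) * (B * Bᵀ) = 1 := by
    rw [Matrix.mul_assoc, ← Matrix.mul_assoc A B, hAB, Matrix.one_mul, ← Matrix.transpose_mul, hBA, Matrix.transpose_one]
  obtain ⟨p, hp⟩ := exists_sqrt_poly _ _ hS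
  set S := Aᵀ * A with hSdef
  set R := Polynomial.aeval S p with hR
  have hRinv : R * (R * (B * Bᵀ)) = 1 := by rw [← Matrix.mul_assoc, hp, hS]
  set R' := R * (B * Bᵀ) with hR'
  clear_value R'
  have hR'R : R' * R = 1 := mul_eq_one_comm.1 hRinv
  have hcomm : ∀ γ, Commute S (ρ γ) := by
    intro γ
    have h1 : (ρ γ)ᵀ * Aᵀ = Aᵀ * (σ γ)ᵀ := by
      rw [← Matrix.transpose_mul, ← Matrix.transpose_mul, h]
    have h2 : ρ γ * (ρ γ)ᵀ = 1 := mul_eq_one_comm.1 (hρ γ)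
    change Aᵀ * A * ρ γ = ρ γ * (Aᵀ * A)
    calc Aᵀ * A * ρ γ = ρ γ * ((ρ γ)ᵀ * Aᵀ) * A * ρ γ := by
          rw [← Matrix.mul_assoc (ρ γ), h2, Matrix.one_mul]
      _ = ρ γ * Aᵀ * (σ γ)ᵀ * (A * ρ γ) := by rw [h1]; simp only [Matrix.mul_assoc]
      _ = ρ γ * Aᵀ * ((σ γ)ᵀ * σ γ) * A := by rw [h]; simp only [Matrix.mul_assoc]
      _ = _ := by rw [hσ, Matrix.mul_one, Matrix.mul_assoc]
  have hRcomm : ∀ γ, Commute R (ρ γ) := fun γ => by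
    have : ∀ q : Polynomial ℂ, Commute (Polynomial.aeval S q) (ρ γ) := by
      intro q
      induction q using Polynomial.induction_on' with
      | add a b ha hb => rw [map_add]; exact ha.add_left hb
      | monomial n a => 
        rw [Polynomial.aeval_monomial]
        exact (show Commute (algebraMap ℂ _ a) (ρ γ) from Algebra.commutes a (ρ γ)).mul_left ((hcomm γ).pow_left n)
    exact this p
  have hST : Sᵀ = S := by rw [hSdef]; simp
  have hRT : Rᵀ = R := by
    have : ∀ q : Polynomial ℂ, (Polynomial.aeval S q)ᵀ = Polynomial.aeval S q := by
      intro q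
      induction q using Polynomial.induction_on' with
      | add a b ha hb => rw [map_add, Matrix.transpose_add, ha, hb]
      | monomial n a => 
        rw [Polynomial.aeval_monomial, Matrix.transpose_mul, Matrix.transpose_pow, hST, Matrix.algebraMap_eq_diagonal, Matrix.diagonal_transpose, ← Matrix.algebraMap_eq_diagonal]
        exact (Algebra.commutes a _).symm
    exact this p
  have hR'T : R'ᵀ = R' := by
    have h1 : R * R'ᵀ = 1 := by
      have := congrArg Matrix.transpose hR'R
      rwa [Matrix.transpose_mul, hRT, Matrix.transpose_one] at this
    calc R'ᵀ = (R' * R) * R'ᵀ := by rw [hR'R, Matrix.one_mul]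
      _ = R' := by rw [Matrix.mul_assoc, h1, Matrix.mul_one]
  have hR'comm : ∀ γ, R' * ρ γ = ρ γ * R' := by
    intro γ
    calc R' * ρ γ = R' * (ρ γ * R) * R' := by
          rw [Matrix.mul_assoc, Matrix.mul_assoc, hRinv, Matrix.mul_one]
      _ = R' * (R * ρ γ) * R' := by rw [(hRcomm γ).eq]
      _ = ρ γ * R' := by rw [← Matrix.mul_assoc, hR'R, Matrix.one_mul]
  refine ⟨A * R', ?_, ?_⟩
  · rw [Matrix.transpose_mul, hR'T]
    calc R' * Aᵀ * (A * R') = R' * (Aᵀ * A) * R' := by simp only [Matrix.mul_assoc]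
      _ = R' * (R * R) * R' := by rw [hp]
      _ = (R' * R) * (R * R') := by simp only [Matrix.mul_assoc]
      _ = 1 := by rw [hR'R, hRinv, Matrix.one_mul]
  · intro γ
    rw [Matrix.mul_assoc, hR'comm, ← Matrix.mul_assoc, h, Matrix.mul_assoc]

/-- self-dual basis -/
def EE : Fin 3 → Matrix (Fin 4) (Fin 4) ℂ :=
  ![!![0,1,0,0; -1,0,0,0; 0,0,0,1; 0,0,-1,0],
    !![0,0,1,0; 0,0,0,-1; -1,0,0,0; 0,1,0,0],
    !![0,0,0,1; 0,0,1,0; 0,-1,0,0; -1,0,0,0]]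

/-- anti-self-dual basis -/
def FF : Fin 3 → Matrix (Fin 4) (Fin 4) ℂ :=
  ![!![0,1,0,0; -1,0,0,0; 0,0,0,-1; 0,0,1,0],
    !![0,0,1,0; 0,0,0,1; -1,0,0,0; 0,-1,0,0],
    !![0,0,0,1; 0,0,-1,0; 0,1,0,0; -1,0,0,0]]

/-- Hodge star -/
def hst (M : Matrix (Fin 4) (Fin 4) ℂ) : Matrix (Fin 4) (Fin 4) ℂ :=
  !![0, M 2 3, -M 1 3, M 1 2;
     -M 2 3, 0, M 0 3, -M 0 2;
     M 1 3, -M 0 3, 0, M 0 1;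
     -M 1 2, M 0 2, -M 0 1, 0]

/-- Pfaffian -/
def pff (M : Matrix (Fin 4) (Fin 4) ℂ) : ℂ := M 0 1 * M 2 3 - M 0 2 * M 1 3 + M 0 3 * M 1 2

/-- generic skew matrix -/
def skw (a b c d e f : ℂ) : Matrix (Fin 4) (Fin 4) ℂ :=
  !![0,a,b,c; -a,0,d,e; -b,-d,0,f; -c,-e,-f,0]

theorem det4 (M : Matrix (Fin 4) (Fin 4) ℂ) : M.det =
   M 0 0 * (M 1 1 * (M 2 2 * M 3 3 - M 2 3 * M 3 2) - M 1 2 * (M 2 1 * M 3 3 - M 2 3 * M 3 1) + M 1 3 * (M 2 1 * M 3 2 - M 2 2 * M 3 1))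
  - M 0 1 * (M 1 0 * (M 2 2 * M 3 3 - M 2 3 * M 3 2) - M 1 2 * (M 2 0 * M 3 3 - M 2 3 * M 3 0) + M 1 3 * (M 2 0 * M 3 2 - M 2 2 * M 3 0))
  + M 0 2 * (M 1 0 * (M 2 1 * M 3 3 - M 2 3 * M 3 1) - M 1 1 * (M 2 0 * M 3 3 - M 2 3 * M 3 0) + M 1 3 * (M 2 0 * M 3 1 - M 2 1 * M 3 0))
  - M 0 3 * (M 1 0 * (M 2 1 * M 3 2 - M 2 2 * M 3 1) - M 1 1 * (M 2 0 * M 3 2 - M 2 2 * M 3 0) + M 1 2 * (M 2 0 * M 3 1 - M 2 1 * M 3 0)) := by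
  rw [Matrix.det_succ_row_zero]
  simp [Fin.sum_univ_succ, Matrix.det_fin_three, Fin.succAbove, Matrix.submatrix]
  ring

theorem eq_skw (M : Matrix (Fin 4) (Fin 4) ℂ) (h : Mᵀ = -M) :
    M = skw (M 0 1) (M 0 2) (M 0 3) (M 1 2) (M 1 3) (M 2 3) := by
  have h' : ∀ i j, M j i = - M i j := fun i j => congrFun (congrFun h i) j
  have h0 : ∀ i, M i i = 0 := fun i => by
    have := h' i i
    linear_combination this / 2
  ext i j
  fin_cases i <;> fin_cases j <;> simp [skw, h0] <;> exact h' _ _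

theorem pff_conj (h M : Matrix (Fin 4) (Fin 4) ℂ) (hM : Mᵀ = -M) :
    pff (h * M * hᵀ) = h.det * pff M := by
  rw [eq_skw M hM, det4]
  simp [pff, skw, Matrix.mul_apply, Fin.sum_univ_four]
  ring

theorem pff_polar (X Y : Matrix (Fin 4) (Fin 4) ℂ) (hY : Yᵀ = -Y) :
    (hst X * Y).trace = -2 * (pff (X + Y) - pff X - pff Y) := by
  rw [eq_skw Y hY]
  simp [pff, hst, skw, Matrix.trace, Fin.sum_univ_succ, Matrix.mul_apply]
  ring

theorem conj_skew (g M : Matrix (Fin 4) (Fin 4) ℂ) (hM : Mᵀ = -M) :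
    (g * M * gᵀ)ᵀ = -(g * M * gᵀ) := by
  simp [Matrix.transpose_mul, hM, Matrix.mul_assoc]

theorem hst_skew (M : Matrix (Fin 4) (Fin 4) ℂ) : (hst M)ᵀ = - hst M := by
  ext i j; fin_cases i <;> fin_cases j <;> simp [hst]

theorem skew_zero (D : Matrix (Fin 4) (Fin 4) ℂ) (hD : Dᵀ = -D)
    (h : ∀ N : Matrix (Fin 4) (Fin 4) ℂ, Nᵀ = -N → (D * N).trace = 0) : D = 0 := by
  have hs : ∀ a b c d e f, (skw a b c d e f)ᵀ = - skw a b c d e f := by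
    intros; ext i j; fin_cases i <;> fin_cases j <;> simp [skw]
  rw [eq_skw D hD] at h ⊢
  have h1 := h _ (hs 1 0 0 0 0 0)
  have h2 := h _ (hs 0 1 0 0 0 0)
  have h3 := h _ (hs 0 0 1 0 0 0)
  have h4 := h _ (hs 0 0 0 1 0 0)
  have h5 := h _ (hs 0 0 0 0 1 0)
  have h6 := h _ (hs 0 0 0 0 0 1)
  simp [skw, Matrix.trace, Fin.sum_univ_succ, Matrix.mul_apply] at h1 h2 h3 h4 h5 h6
  have e1 : D 0 1 = 0 := h1
  have e2 : D 0 2 = 0 := h2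
  have e3 : D 0 3 = 0 := h3
  have e4 : D 1 2 = 0 := h4
  have e5 : D 1 3 = 0 := h5
  have e6 : D 2 3 = 0 := h6
  rw [e1, e2, e3, e4, e5, e6]
  ext i j; fin_cases i <;> fin_cases j <;> simp [skw]

theorem hst_conj (g M : Matrix (Fin 4) (Fin 4) ℂ) (hM : Mᵀ = -M) :
    gᵀ * hst (g * M * gᵀ) * g = g.det • hst M := by
  rw [← sub_eq_zero]
  apply skew_zero
  · have h1 := conj_skew gᵀ _ (hst_skew (g * M * gᵀ))
    rw [Matrix.transpose_transpose] at h1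
    rw [Matrix.transpose_sub, h1, Matrix.transpose_smul, hst_skew M, smul_neg]
    abel
  · intro N hN
    rw [Matrix.sub_mul, Matrix.trace_sub, Matrix.smul_mul, Matrix.trace_smul, pff_polar _ _ hN]
    have h1 : (gᵀ * hst (g * M * gᵀ) * g * N).trace = (hst (g * M * gᵀ) * (g * N * gᵀ)).trace := by
      rw [Matrix.mul_assoc, Matrix.mul_assoc, Matrix.trace_mul_comm]
      simp only [Matrix.mul_assoc]
    rw [h1, pff_polar _ _ (conj_skew g N hN), ← Matrix.add_mul, ← Matrix.mul_add,
      pff_conj _ _ hM, pff_conj _ _ hN, pff_conj _ _ (by rw [Matrix.transpose_add, hM, hN]; abel)]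
    simp only [smul_eq_mul]
    ring

/-- the 3-dim representations -/
noncomputable def rho (E : Fin 3 → Matrix (Fin 4) (Fin 4) ℂ) (g : Matrix (Fin 4) (Fin 4) ℂ) :
    Matrix (Fin 3) (Fin 3) ℂ := Matrix.of fun c a => -(1/4) * (E c * (g * E a * gᵀ)).trace

theorem rho_apply (E : Fin 3 → Matrix (Fin 4) (Fin 4) ℂ) (g : Matrix (Fin 4) (Fin 4) ℂ) (c a : Fin 3) :
    rho E g c a = -(1/4) * (E c * (g * E a * gᵀ)).trace := rfl


theorem trace_diff (g : Matrix (Fin 4) (Fin 4) ℂ) :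
    (rho EE g).trace - (rho FF g).trace = - pff (g - gᵀ) := by
  simp [rho, Matrix.trace, EE, FF, pff, Matrix.mul_apply, Fin.sum_univ_succ]
  ring

theorem EE_skew (a) : (EE a)ᵀ = - EE a := by
  fin_cases a <;> ext i j <;> fin_cases i <;> fin_cases j <;> simp [EE]
theorem FF_skew (a) : (FF a)ᵀ = - FF a := by
  fin_cases a <;> ext i j <;> fin_cases i <;> fin_cases j <;> simp [FF]
theorem EE_hst (a) : hst (EE a) = EE a := by
  fin_cases a <;> ext i j <;> fin_cases i <;> fin_cases j <;> simp [EE, hst]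
theorem FF_hst (a) : hst (FF a) = - FF a := by
  fin_cases a <;> ext i j <;> fin_cases i <;> fin_cases j <;> simp [FF, hst]

theorem EE_exp (M : Matrix (Fin 4) (Fin 4) ℂ) (hM : Mᵀ = -M) (h : hst M = M) :
    M = ∑ c, (-(1/4) * (EE c * M).trace) • EE c := by
  have h1 := congrFun (congrFun h 0) 1
  have h2 := congrFun (congrFun h 0) 2
  have h3 := congrFun (congrFun h 0) 3
  rw [eq_skw M hM] at h1 h2 h3 ⊢
  generalize M 0 1 = a at *
  generalize M 0 2 = b at *
  generalize M 0 3 = c at *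
  simp [hst, skw] at h1 h2 h3
  have e2 : M 1 3 = -b := by linear_combination -h2
  rw [h1, e2, h3]
  rw [Fin.sum_univ_three]
  have t0 : (EE 0 * skw a b c c (-b) a).trace = -4 * a := by
    simp [EE, Matrix.trace, Fin.sum_univ_succ, skw]
    ring
  have t1 : (EE 1 * skw a b c c (-b) a).trace = -4 * b := by
    simp [EE, Matrix.trace, Fin.sum_univ_succ, skw]
    ring
  have t2 : (EE 2 * skw a b c c (-b) a).trace = -4 * c := by
    simp [EE, Matrix.trace, Fin.sum_univ_succ, skw]
    ring
  rw [t0, t1, t2]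
  ext i j
  fin_cases i <;> fin_cases j <;> simp [EE, skw] <;> ring

theorem FF_exp (M : Matrix (Fin 4) (Fin 4) ℂ) (hM : Mᵀ = -M) (h : hst M = -M) :
    M = ∑ c, (-(1/4) * (FF c * M).trace) • FF c := by
  have h1 := congrFun (congrFun h 0) 1
  have h2 := congrFun (congrFun h 0) 2
  have h3 := congrFun (congrFun h 0) 3
  rw [eq_skw M hM] at h1 h2 h3 ⊢
  generalize M 0 1 = a at *
  generalize M 0 2 = b at *
  generalize M 0 3 = c at *
  simp [hst, skw] at h1 h2 h3
  rw [h1, h2, h3]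
  rw [Fin.sum_univ_three]
  have t0 : (FF 0 * skw a b c (-c) b (-a)).trace = -4 * a := by
    simp [FF, Matrix.trace, Fin.sum_univ_succ, skw]
    ring
  have t1 : (FF 1 * skw a b c (-c) b (-a)).trace = -4 * b := by
    simp [FF, Matrix.trace, Fin.sum_univ_succ, skw]
    ring
  have t2 : (FF 2 * skw a b c (-c) b (-a)).trace = -4 * c := by
    simp [FF, Matrix.trace, Fin.sum_univ_succ, skw]
    ring
  rw [t0, t1, t2]
  ext i j
  fin_cases i <;> fin_cases j <;> simp [FF, skw] <;> ring

theorem hst_conj' (g M : Matrix (Fin 4) (Fin 4) ℂ) (hM : Mᵀ = -M) (hg : gᵀ * g = 1) (hd : g.det = 1) :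
    hst (g * M * gᵀ) = g * hst M * gᵀ := by
  have h2 : g * gᵀ = 1 := mul_eq_one_comm.1 hg
  have h := hst_conj g M hM
  rw [hd, one_smul] at h
  rw [← h]
  calc hst (g * M * gᵀ) = (g * gᵀ) * hst (g * M * gᵀ) * (g * gᵀ) := by rw [h2]; simp
    _ = _ := by simp only [Matrix.mul_assoc]

theorem EE_act (g : Matrix (Fin 4) (Fin 4) ℂ) (hg : gᵀ * g = 1) (hd : g.det = 1) (a : Fin 3) :
    g * EE a * gᵀ = ∑ c, rho EE g c a • EE c := by
  refine EE_exp _ (conj_skew g _ (EE_skew a)) ?_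
  rw [hst_conj' g _ (EE_skew a) hg hd, EE_hst]

theorem FF_act (g : Matrix (Fin 4) (Fin 4) ℂ) (hg : gᵀ * g = 1) (hd : g.det = 1) (a : Fin 3) :
    g * FF a * gᵀ = ∑ c, rho FF g c a • FF c := by
  refine FF_exp _ (conj_skew g _ (FF_skew a)) ?_
  rw [hst_conj' g _ (FF_skew a) hg hd, FF_hst]
  simp

theorem EE_one : rho EE 1 = 1 := by
  ext i j
  fin_cases i <;> fin_cases j <;>
    simp [rho, EE, Matrix.trace, Fin.sum_univ_succ, Matrix.vecMul, Matrix.vecHead, Matrix.vecTail] <;> norm_num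
theorem FF_one : rho FF 1 = 1 := by
  ext i j
  fin_cases i <;> fin_cases j <;>
    simp [rho, FF, Matrix.trace, Fin.sum_univ_succ, Matrix.vecMul, Matrix.vecHead, Matrix.vecTail] <;> norm_num

theorem rho_mul (E : Fin 3 → Matrix (Fin 4) (Fin 4) ℂ) (g h : Matrix (Fin 4) (Fin 4) ℂ)
    (H : ∀ a, h * E a * hᵀ = ∑ c, rho E h c a • E c) : rho E (g * h) = rho E g * rho E h := by
  ext c a
  have h1 : g * h * E a * (g * h)ᵀ = ∑ b, rho E h b a • (g * E b * gᵀ) := by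
    calc g * h * E a * (g * h)ᵀ = g * (h * E a * hᵀ) * gᵀ := by
          rw [Matrix.transpose_mul]; simp only [Matrix.mul_assoc]
      _ = _ := by
          rw [H, Matrix.mul_sum, Matrix.sum_mul]
          simp only [Matrix.mul_smul, Matrix.smul_mul]
  rw [Matrix.mul_apply]
  rw [rho_apply]
  rw [h1, Matrix.mul_sum, Matrix.trace_sum, Finset.mul_sum]
  refine Finset.sum_congr rfl fun b _ => ?_
  rw [Matrix.mul_smul, Matrix.trace_smul, smul_eq_mul]
  rw [rho_apply E g]
  ring

theorem rho_transpose (E : Fin 3 → Matrix (Fin 4) (Fin 4) ℂ) (g : Matrix (Fin 4) (Fin 4) ℂ) :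
    (rho E g)ᵀ = rho E gᵀ := by
  ext a c
  simp only [Matrix.transpose_apply, rho_apply, Matrix.transpose_transpose]
  congr 1
  rw [← Matrix.mul_assoc, Matrix.trace_mul_comm, Matrix.trace_mul_comm (E a)]
  simp only [Matrix.mul_assoc]

/-- invariant symmetric matrix -/
noncomputable def QQ (T : Matrix (Fin 3) (Fin 3) ℂ) : Matrix (Fin 4) (Fin 4) ℂ :=
  ∑ a, ∑ b, T a b • (EE a * FF b)

theorem QQ_comm (g : Matrix (Fin 4) (Fin 4) ℂ) (hg : gᵀ * g = 1) (hd : g.det = 1)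
    (T : Matrix (Fin 3) (Fin 3) ℂ) (hT : rho EE g * T * (rho FF g)ᵀ = T) :
    g * QQ T = QQ T * g := by
  have key : g * QQ T * gᵀ = QQ T := by
    have h1 : ∀ a b, g * (EE a * FF b) * gᵀ = ∑ c, ∑ d, (rho EE g c a * rho FF g d b) • (EE c * FF d) := by
      intro a b
      calc g * (EE a * FF b) * gᵀ = g * EE a * (gᵀ * g) * FF b * gᵀ := by
            rw [hg]; simp [Matrix.mul_assoc]
        _ = (g * EE a * gᵀ) * (g * FF b * gᵀ) := by simp only [Matrix.mul_assoc]
        _ = _ := by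
            rw [EE_act g hg hd, FF_act g hg hd, Matrix.sum_mul]
            simp only [Matrix.mul_sum, Matrix.smul_mul, Matrix.mul_smul, smul_smul, mul_comm]
    have h2 : g * QQ T * gᵀ = QQ (rho EE g * T * (rho FF g)ᵀ) := by
      simp only [QQ, Matrix.mul_sum, Matrix.sum_mul, Matrix.mul_smul, Matrix.smul_mul, h1]
      simp only [Matrix.mul_apply, Matrix.transpose_apply, Fin.sum_univ_three]
      module
    rw [h2, hT]
  calc g * QQ T = g * QQ T * (gᵀ * g) := by rw [hg, Matrix.mul_one]
    _ = (g * QQ T * gᵀ) * g := by simp only [Matrix.mul_assoc]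
    _ = _ := by rw [key]

noncomputable def PP (T : Matrix (Fin 3) (Fin 3) ℂ) : Matrix (Fin 4) (Fin 4) ℂ :=
  (1/4 : ℂ) • (1 - QQ T)


theorem refl_of_rank1 (P : Matrix (Fin 4) (Fin 4) ℂ) (ht : P 0 0 + P 1 1 + P 2 2 + P 3 3 = 1)
    (hm : ∀ i j k, P i i * P j k = P i j * P i k) :
    (1 - (2:ℂ) • P)ᵀ * (1 - (2:ℂ) • P) = 1 ∧ (1 - (2:ℂ) • P).det = -1 := by
  obtain ⟨i, hi⟩ : ∃ i, P i i ≠ 0 := by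
    by_contra! h
    simp [h] at ht
  have hP : ∀ j k, P j k = (P i i)⁻¹ * P i j * P i k := by
    intro j k
    rw [mul_assoc, ← hm i j k]
    field_simp
  generalize (P i i)⁻¹ = c at hP
  obtain ⟨u, hu⟩ : ∃ u : Fin 4 → ℂ, u = P i := ⟨_, rfl⟩
  simp only [← hu] at hP
  clear hu hi hm
  rw [hP 0 0, hP 1 1, hP 2 2, hP 3 3] at ht
  constructor
  · ext j k
    have h2 : ((1 - (2:ℂ) • P)ᵀ * (1 - (2:ℂ) • P) : Matrix (Fin 4) (Fin 4) ℂ) j k =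
      ∑ l, ((1 : Matrix (Fin 4) (Fin 4) ℂ) l j - 2 * (c * u l * u j)) * ((1 : Matrix (Fin 4) (Fin 4) ℂ) l k - 2 * (c * u l * u k)) := by
      rw [Matrix.mul_apply]
      refine Finset.sum_congr rfl fun l _ => ?_
      simp only [Matrix.transpose_apply, Matrix.sub_apply, Matrix.smul_apply, hP l, smul_eq_mul]
    rw [h2]
    have h3 : ∑ l, ((1 : Matrix (Fin 4) (Fin 4) ℂ) l j - 2 * (c * u l * u j)) * ((1 : Matrix (Fin 4) (Fin 4) ℂ) l k - 2 * (c * u l * u k))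
      = (1 : Matrix (Fin 4) (Fin 4) ℂ) j k - 4 * c * u j * u k + 4 * c * u j * u k * ∑ l, c * u l * u l := by
      simp only [sub_mul, mul_sub, Finset.sum_sub_distrib, Matrix.one_apply, ite_mul, mul_ite, one_mul, mul_one, zero_mul, mul_zero, Finset.sum_ite_eq, Finset.sum_ite_eq', Finset.mem_univ, if_true]
      rw [Finset.mul_sum]
      have : ∀ l, 2 * (c * u l * u j) * (2 * (c * u l * u k)) = 4 * c * u j * u k * (c * u l * u l) := fun l => by ring
      simp only [this, eq_comm (a := k) (b := j)]
      ring
    rw [h3, Fin.sum_univ_four, ht]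
    ring
  · rw [det4]
    simp only [Matrix.sub_apply, Matrix.smul_apply, hP _ _, smul_eq_mul, Matrix.one_apply]
    simp
    linear_combination (-2) * ht

theorem QQ_explicit (T : Matrix (Fin 3) (Fin 3) ℂ) : QQ T =
  !![-T 0 0 - T 1 1 - T 2 2, T 1 2 - T 2 1, -T 0 2 + T 2 0, T 0 1 - T 1 0;
        T 1 2 - T 2 1, -T 0 0 + T 1 1 + T 2 2, -T 0 1 - T 1 0, -T 0 2 - T 2 0;
        -T 0 2 + T 2 0, -T 0 1 - T 1 0, T 0 0 - T 1 1 + T 2 2, -T 1 2 - T 2 1;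
        T 0 1 - T 1 0, -T 0 2 - T 2 0, -T 1 2 - T 2 1, T 0 0 + T 1 1 - T 2 2] := by
  ext i j
  fin_cases i <;> fin_cases j <;>
    (simp [QQ, EE, FF, Fin.sum_univ_three, Matrix.sum_apply, Matrix.smul_apply, Matrix.mul_apply, Fin.sum_univ_four] <;> ring)

theorem PP_rank (T : Matrix (Fin 3) (Fin 3) ℂ) (hT : Tᵀ * T = 1) (hd : T.det = 1) (i j k : Fin 4) :
    PP T i i * PP T j k = PP T i j * PP T i k := by
  have hT2 : T * Tᵀ = 1 := mul_eq_one_comm.mp hT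
  have hadj : T.adjugate = Tᵀ := by
    calc T.adjugate = (Tᵀ * T) * T.adjugate := by rw [hT, one_mul]
      _ = Tᵀ := by rw [mul_assoc, Matrix.mul_adjugate, hd, one_smul, mul_one]
  rw [Matrix.adjugate_fin_three] at hadj
  have hc : ∀ a b, T 0 a * T 0 b + T 1 a * T 1 b + T 2 a * T 2 b = (1 : Matrix (Fin 3) (Fin 3) ℂ) a b := by
    intro a b
    rw [← hT, Matrix.mul_apply, Fin.sum_univ_three]; rfl
  have hr : ∀ a b, T a 0 * T b 0 + T a 1 * T b 1 + T a 2 * T b 2 = (1 : Matrix (Fin 3) (Fin 3) ℂ) a b := by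
    intro a b
    rw [← hT2, Matrix.mul_apply, Fin.sum_univ_three]; rfl
  have c00 := hc 0 0
  have c01 := hc 0 1
  have c02 := hc 0 2
  have c11 := hc 1 1
  have c12 := hc 1 2
  have c22 := hc 2 2
  have r00 := hr 0 0
  have r01 := hr 0 1
  have r02 := hr 0 2
  have r11 := hr 1 1
  have r12 := hr 1 2
  have r22 := hr 2 2
  have k00 := congrFun (congrFun hadj 0) 0
  have k01 := congrFun (congrFun hadj 1) 0
  have k02 := congrFun (congrFun hadj 2) 0
  have k10 := congrFun (congrFun hadj 0) 1
  have k11 := congrFun (congrFun hadj 1) 1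
  have k12 := congrFun (congrFun hadj 2) 1
  have k20 := congrFun (congrFun hadj 0) 2
  have k21 := congrFun (congrFun hadj 1) 2
  have k22 := congrFun (congrFun hadj 2) 2
  clear hc hr hadj hT hT2 hd
  simp [Matrix.one_apply] at c00 c01 c02 c11 c12 c22 r00 r01 r02 r11 r12 r22 k00 k01 k02 k10 k11 k12 k20 k21 k22
  simp only [PP, QQ_explicit]
  generalize T 0 0 = a0 at *
  generalize T 0 1 = a1 at *
  generalize T 0 2 = a2 at *
  generalize T 1 0 = b0 at *
  generalize T 1 1 = b1 at *
  generalize T 1 2 = b2 at *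
  generalize T 2 0 = d0 at *
  generalize T 2 1 = d1 at *
  generalize T 2 2 = d2 at *
  fin_cases i <;> fin_cases j <;> fin_cases k <;> simp [Matrix.one_apply] <;> grind

theorem iso_orth {G : Type} [Group G] [Finite G] {n : ℕ} (ρ σ : G →* Matrix (Fin n) (Fin n) ℂ)
    (hρ : ∀ g, (ρ g)ᵀ * ρ g = 1) (hσ : ∀ g, (σ g)ᵀ * σ g = 1)
    (h : ∀ g, (ρ g).trace = (σ g).trace) :
    ∃ g : Matrix (Fin n) (Fin n) ℂ, gᵀ * g = 1 ∧ ∀ γ, g * ρ γ = σ γ * g := by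
  obtain ⟨A, B, hAB, hA⟩ := mat_iso_of_trace ρ σ h
  exact orth_of_iso ρ σ hρ hσ A B hAB hA

theorem det_orth {n : ℕ} (g : Matrix (Fin n) (Fin n) ℂ) (h : gᵀ * g = 1) :
    g.det = 1 ∨ g.det = -1 := by
  have := congrArg Matrix.det h
  rw [Matrix.det_mul, Matrix.det_transpose, Matrix.det_one] at this
  exact mul_self_eq_one_iff.mp this

theorem conj_of_comm {n : ℕ} (g a b : Matrix (Fin n) (Fin n) ℂ) (hg : gᵀ * g = 1)
    (h : g * a = b * g) : b = g * a * gᵀ := by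
  rw [h, mul_assoc, mul_eq_one_comm.mp hg, mul_one]

theorem pff_conj_diff (h g : Matrix (Fin 4) (Fin 4) ℂ) :
    pff (h * g * hᵀ - (h * g * hᵀ)ᵀ) = h.det * pff (g - gᵀ) := by
  rw [← pff_conj h (g - gᵀ) (by simp)]
  congr 1
  simp [mul_sub, sub_mul, Matrix.mul_assoc]

/-- the homomorphism on self-dual forms -/
def homE {G : Type} [Group G] (φ : G →* Matrix (Fin 4) (Fin 4) ℂ)
    (h : ∀ γ, (φ γ)ᵀ * φ γ = 1) (hd : ∀ γ, (φ γ).det = 1) : G →* Matrix (Fin 3) (Fin 3) ℂ where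
  toFun γ := rho EE (φ γ)
  map_one' := by rw [map_one, EE_one]
  map_mul' a b := by rw [map_mul]; exact rho_mul EE _ _ (EE_act _ (h b) (hd b))

/-- the homomorphism on anti-self-dual forms -/
def homF {G : Type} [Group G] (φ : G →* Matrix (Fin 4) (Fin 4) ℂ)
    (h : ∀ γ, (φ γ)ᵀ * φ γ = 1) (hd : ∀ γ, (φ γ).det = 1) : G →* Matrix (Fin 3) (Fin 3) ℂ where
  toFun γ := rho FF (φ γ)
  map_one' := by rw [map_one, FF_one]
  map_mul' a b := by rw [map_mul]; exact rho_mul FF _ _ (FF_act _ (h b) (hd b))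

theorem refl_exists {G : Type} [Group G] [Finite G] (φ : G →* Matrix (Fin 4) (Fin 4) ℂ)
    (h : ∀ γ, (φ γ)ᵀ * φ γ = 1) (hd : ∀ γ, (φ γ).det = 1)
    (hp : ∀ γ, pff (φ γ - (φ γ)ᵀ) = 0) :
    ∃ r : Matrix (Fin 4) (Fin 4) ℂ, rᵀ * r = 1 ∧ r.det = -1 ∧ ∀ γ, r * φ γ = φ γ * r := by
  have hE : ∀ γ, (rho EE (φ γ))ᵀ * rho EE (φ γ) = 1 := fun γ => by
    rw [rho_transpose, ← rho_mul EE _ _ (EE_act _ (h γ) (hd γ)), h γ, EE_one]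
  have hF : ∀ γ, (rho FF (φ γ))ᵀ * rho FF (φ γ) = 1 := fun γ => by
    rw [rho_transpose, ← rho_mul FF _ _ (FF_act _ (h γ) (hd γ)), h γ, FF_one]
  obtain ⟨t, ht, hc⟩ := iso_orth (homF φ h hd) (homE φ h hd) hF hE (fun γ => by
    have h1 := trace_diff (φ γ)
    rw [hp γ, neg_zero] at h1
    exact (sub_eq_zero.mp h1).symm)
  have hc' : ∀ γ, t * rho FF (φ γ) = rho EE (φ γ) * t := hc
  obtain ⟨t, ht, hc, hdt⟩ : ∃ t : Matrix (Fin 3) (Fin 3) ℂ, tᵀ * t = 1 ∧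
      (∀ γ, t * rho FF (φ γ) = rho EE (φ γ) * t) ∧ t.det = 1 := by
    rcases det_orth t ht with h1 | h1
    · exact ⟨t, ht, hc', h1⟩
    · refine ⟨-t, by simpa using ht, fun γ => by simp [hc' γ], ?_⟩
      rw [Matrix.det_neg, h1]; norm_num
  obtain ⟨h1, h2⟩ := refl_of_rank1 (PP t) (by
    simp only [PP, QQ_explicit]
    simp
    ring) (PP_rank t ht hdt)
  refine ⟨_, h1, h2, fun γ => ?_⟩
  have h3 := QQ_comm (φ γ) (h γ) (hd γ) t (by
    rw [← hc γ, mul_assoc, mul_eq_one_comm.mp (hF γ), mul_one])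
  simp only [PP, mul_sub, sub_mul, Matrix.mul_smul, Matrix.smul_mul, h3, mul_one, one_mul]

/-- The group `SO₄(ℂ)` is acceptable: any two pointwise (locally) conjugate homomorphisms
from a finite group into `SO₄(ℂ)` are globally conjugate.  (Group homomorphisms into
`SO₄(ℂ)` are encoded as monoid homomorphisms into the multiplicative monoid of matrices
landing in `SO₄(ℂ)`.) -/
theorem statement13 (Γ : Type) [Group Γ] [Finite Γ]
    (φ φ' : Γ →* Matrix (Fin 4) (Fin 4) ℂ)
    (hφ : ∀ γ, memSO 4 (φ γ)) (hφ' : ∀ γ, memSO 4 (φ' γ))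
    (hloc : ∀ γ : Γ, ∃ g : Matrix (Fin 4) (Fin 4) ℂ,
      memSO 4 g ∧ φ' γ = g * φ γ * g⁻¹) :
    ∃ g : Matrix (Fin 4) (Fin 4) ℂ, memSO 4 g ∧ ∀ γ : Γ, φ' γ = g * φ γ * g⁻¹ := by
  have inv_eq : ∀ g : Matrix (Fin 4) (Fin 4) ℂ, gᵀ * g = 1 → g⁻¹ = gᵀ :=
    fun g hg => Matrix.inv_eq_left_inv hg
  obtain ⟨s, hs, hsc⟩ := iso_orth φ φ' (fun γ => (hφ γ).1) (fun γ => (hφ' γ).1) (fun γ => by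
    obtain ⟨g, hg, e⟩ := hloc γ
    rw [e, inv_eq g hg.1, Matrix.trace_mul_comm, ← mul_assoc, hg.1, one_mul])
  rcases det_orth s hs with hd | hd
  · refine ⟨s, ⟨hs, hd⟩, fun γ => ?_⟩
    rw [inv_eq s hs]
    exact conj_of_comm _ _ _ hs (hsc γ)
  · obtain ⟨r, hr, hrd, hrc⟩ := refl_exists φ (fun γ => (hφ γ).1) (fun γ => (hφ γ).2) (fun γ => by
      obtain ⟨g, hg, e⟩ := hloc γ
      rw [inv_eq g hg.1] at e
      have e2 := conj_of_comm _ _ _ hs (hsc γ)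
      have p1 := pff_conj_diff g (φ γ)
      have p2 := pff_conj_diff s (φ γ)
      rw [← e, hg.2] at p1
      rw [← e2, hd] at p2
      linear_combination (p2 - p1) / 2)
    have ho : (s * r)ᵀ * (s * r) = 1 := by
      rw [Matrix.transpose_mul, mul_assoc, ← mul_assoc sᵀ, hs, one_mul, hr]
    refine ⟨s * r, ⟨ho, ?_⟩, fun γ => ?_⟩
    · rw [Matrix.det_mul, hd, hrd]; norm_num
    · rw [inv_eq _ ho]
      refine conj_of_comm _ _ _ ho ?_
      rw [mul_assoc, hrc γ, ← mul_assoc, hsc γ, mul_assoc]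


end
end

section
/- For every n ≥ 1, the unitary group U(n) := {M ∈ GL_n(ℂ) : M* M = 1} (M* the conjugate transpose) is strongly acceptable: for every group Γ (not necessarily finite) and homomorphisms φ, φ' : Γ → U(n) such that φ(γ) and φ'(γ) are conjugate in U(n) for every γ ∈ Γ, there exists u ∈ U(n) with φ'(γ) = u φ(γ) u⁻¹ for all γ ∈ Γ. -/
open Matrix

noncomputable section

/-- Membership in the unitary group `U(n) = {M ∈ GL_n(ℂ) : M* M = 1}`, where `M*` is the
conjugate transpose. -/
def memU (n : ℕ) (g : Matrix (Fin n) (Fin n) ℂ) : Prop :=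
  gᴴ * g = 1

open scoped ComplexOrder

theorem exists_onb_core {V : Type} [AddCommGroup V] [Module ℂ V] [FiniteDimensional ℂ V]
    (c : InnerProductSpace.Core ℂ V) :
    ∃ (k : ℕ) (e : Fin k → V), ∀ x, ∑ i, c.inner (e i) x • e i = x := by
  let _ : NormedAddCommGroup V := c.toNormedAddCommGroup
  let _ : InnerProductSpace ℂ V := InnerProductSpace.ofCore c.toCore
  exact ⟨_, stdOrthonormalBasis ℂ V, fun x => (stdOrthonormalBasis ℂ V).sum_repr' x⟩

abbrev Mn (n : ℕ) := Matrix (Fin n) (Fin n) ℂ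

theorem trace_star_self {n : ℕ} (a : Mn n) :
    0 ≤ (aᴴ * a).trace ∧ ((aᴴ * a).trace = 0 → a = 0) :=
  ⟨(Matrix.posSemidef_conjTranspose_mul_self a).trace_nonneg,
    fun h => Matrix.trace_conjTranspose_mul_self_eq_zero_iff.mp h⟩

@[reducible] def coreSub {n : ℕ} (A : Submodule ℂ (Mn n × Mn n)) : InnerProductSpace.Core ℂ A where
  inner x y := (x.1.1ᴴ * y.1.1).trace + (x.1.2ᴴ * y.1.2).trace
  conj_inner_symm x y := by
    simp only [map_add, starRingEnd_apply, ← Matrix.trace_conjTranspose,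
      Matrix.conjTranspose_mul, Matrix.conjTranspose_conjTranspose]
  re_inner_nonneg x := by
    have h1 := (Complex.le_def.mp (trace_star_self x.1.1).1).1
    have h2 := (Complex.le_def.mp (trace_star_self x.1.2).1).1
    simp at h1 h2 ⊢
    linarith
  add_left x y z := by
    simp [Matrix.add_mul]; ring
  smul_left x y r := by
    simp; ring
  definite x h := by
    have h1 := trace_star_self x.1.1
    have h2 := trace_star_self x.1.2
    have h3 := (add_eq_zero_iff_of_nonneg h1.1 h2.1).mp h
    exact Subtype.ext (Prod.ext (h1.2 h3.1) (h2.2 h3.2))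

theorem exists_nonzero_intertwiner (n : ℕ) (Γ : Type) [Group Γ]
    (φ φ' : Γ →* Mn n)
    (hs : ∀ γ, (φ γ)ᴴ = φ γ⁻¹) (hs' : ∀ γ, (φ' γ)ᴴ = φ' γ⁻¹)
    (p q : Mn n) (hp : pᴴ = p) (hp0 : p.trace ≠ 0)
    (hpq : ∀ γ, (p * φ γ).trace = (q * φ' γ).trace) :
    ∃ x : Mn n, (∀ γ, x * φ γ = φ' γ * x) ∧ q * x * p ≠ 0 := by
  set A : Submodule ℂ (Mn n × Mn n) := Submodule.span ℂ (Set.range fun γ => (φ γ, φ' γ)) with hA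
  have hmul : ∀ γ, ∀ a ∈ A, (φ γ * a.1, φ' γ * a.2) ∈ A := by
    intro γ a ha
    induction ha using Submodule.span_induction with
    | mem x hx =>
      obtain ⟨δ, rfl⟩ := hx
      exact Submodule.subset_span ⟨γ * δ, by simp⟩
    | zero => simp only [Prod.fst_zero, Prod.snd_zero, Matrix.mul_zero]; exact A.zero_mem
    | add x y _ _ hx hy => simpa [Matrix.mul_add] using A.add_mem hx hy
    | smul r x _ hx => simpa using A.smul_mem r hx
  have htr : ∀ a ∈ A, (p * a.1).trace = (q * a.2).trace := by
    intro a ha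
    induction ha using Submodule.span_induction with
    | mem x hx =>
      obtain ⟨δ, rfl⟩ := hx
      exact hpq δ
    | zero => simp
    | add x y _ _ hx hy => simp [Matrix.mul_add, hx, hy]
    | smul r x _ hx => simp [hx]
  obtain ⟨k, e, he⟩ := exists_onb_core (coreSub A)
  have he' : ∀ a (ha : a ∈ A), (∑ i, (coreSub A).inner (e i) ⟨a, ha⟩ • (e i).1) = a := by
    intro a ha
    have := congrArg Subtype.val (he ⟨a, ha⟩)
    simpa using this
  have he1 : ∀ a (ha : a ∈ A), (∑ i, (coreSub A).inner (e i) ⟨a, ha⟩ • (e i).1.1) = a.1 := by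
    intro a ha
    have := congrArg Prod.fst (he' a ha)
    simpa [Prod.fst_sum] using this
  have he2 : ∀ a (ha : a ∈ A), (∑ i, (coreSub A).inner (e i) ⟨a, ha⟩ • (e i).1.2) = a.2 := by
    intro a ha
    have := congrArg Prod.snd (he' a ha)
    simpa [Prod.snd_sum] using this
  have hint : ∀ (y : Mn n) γ, (∑ i, (e i).1.2 * y * ((e i).1.1)ᴴ) * φ γ
      = φ' γ * ∑ i, (e i).1.2 * y * ((e i).1.1)ᴴ := by
    intro y γ
    have hR : ∀ i, φ' γ * (e i).1.2 = ∑ j, (coreSub A).inner (e j) ⟨_, hmul γ _ (e i).2⟩ • (e j).1.2 :=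
      fun i => (he2 _ (hmul γ _ (e i).2)).symm
    have hL : ∀ j, ((e j).1.1)ᴴ * φ γ = ∑ i, (coreSub A).inner (e j) ⟨_, hmul γ _ (e i).2⟩ • ((e i).1.1)ᴴ := by
      intro j
      have := congrArg conjTranspose (he1 _ (hmul γ⁻¹ _ (e j).2))
      simp only [Matrix.conjTranspose_mul, hs, inv_inv, Matrix.conjTranspose_sum,
        Matrix.conjTranspose_smul] at this
      rw [← this]
      refine Finset.sum_congr rfl fun i _ => ?_
      congr 1
      have h := (coreSub A).conj_inner_symm (⟨_, hmul γ⁻¹ _ (e j).2⟩ : A) (e i)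
      rw [← starRingEnd_apply, h]
      change ((φ γ⁻¹ * (e j).1.1)ᴴ * (e i).1.1).trace + ((φ' γ⁻¹ * (e j).1.2)ᴴ * (e i).1.2).trace
        = (((e j).1.1)ᴴ * (φ γ * (e i).1.1)).trace + (((e j).1.2)ᴴ * (φ' γ * (e i).1.2)).trace
      rw [Matrix.conjTranspose_mul, Matrix.conjTranspose_mul, hs, hs', inv_inv, Matrix.mul_assoc,
        Matrix.mul_assoc]
    generalize hU : (fun j i => (coreSub A).inner (e j) ⟨_, hmul γ _ (e i).2⟩) = U at *
    have hU' : ∀ j i, (coreSub A).inner (e j) ⟨_, hmul γ _ (e i).2⟩ = U j i :=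
      fun j i => congrFun (congrFun hU j) i
    replace hR : ∀ i, φ' γ * (e i).1.2 = ∑ j, U j i • (e j).1.2 := fun i => by
      rw [hR]; exact Finset.sum_congr rfl fun j _ => by rw [hU']
    replace hL : ∀ j, ((e j).1.1)ᴴ * φ γ = ∑ i, U j i • ((e i).1.1)ᴴ := fun j => by
      rw [hL]; exact Finset.sum_congr rfl fun i _ => by rw [hU']
    rw [Finset.sum_mul, Finset.mul_sum]
    simp only [Matrix.mul_assoc, hL]
    simp only [← Matrix.mul_assoc, hR]
    simp only [Finset.mul_sum, Finset.sum_mul, Matrix.mul_smul, Matrix.smul_mul]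
    rw [Finset.sum_comm]
  by_contra hcon
  push Not at hcon
  have hz : ∀ y : Mn n, q * (∑ i, (e i).1.2 * y * ((e i).1.1)ᴴ) * p = 0 :=
    fun y => hcon _ (hint y)
  have hsum : ∑ i, (q * (e i).1.2).trace * (((e i).1.1)ᴴ * p).trace = 0 := by
    have h1 : ∀ a b, (∑ i, (q * (e i).1.2) a a * (((e i).1.1)ᴴ * p) b b) = 0 := by
      intro a b
      have := congrFun (congrFun (hz (Matrix.single a b 1)) a) b
      rw [Finset.mul_sum, Finset.sum_mul, Matrix.sum_apply] at this
      simp only [Matrix.zero_apply] at this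
      rw [← this]
      refine Finset.sum_congr rfl fun i _ => ?_
      have : q * ((e i).1.2 * single a b 1 * ((e i).1.1)ᴴ) * p
        = (q * (e i).1.2) * single a b 1 * (((e i).1.1)ᴴ * p) := by
        simp only [Matrix.mul_assoc]
      symm
      rw [this, Matrix.mul_apply, Finset.sum_eq_single b]
      · rw [Matrix.mul_single_apply_same, mul_one]
      · intro c _ hc
        rw [Matrix.mul_single_apply_of_ne _ _ _ _ _ hc, zero_mul]
      · simp
    simp only [Matrix.trace, Matrix.diag_apply, Finset.sum_mul_sum]
    rw [Finset.sum_comm]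
    refine Finset.sum_eq_zero fun a _ => ?_
    rw [Finset.sum_comm]
    exact Finset.sum_eq_zero fun b _ => h1 a b
  have hall : ∀ i, (p * (e i).1.1).trace = 0 := by
    have h2 : ∀ i, (q * (e i).1.2).trace * (((e i).1.1)ᴴ * p).trace
        = ((Complex.normSq (p * (e i).1.1).trace : ℝ) : ℂ) := by
      intro i
      rw [← htr _ (e i).2, ← Complex.mul_conj, starRingEnd_apply, ← Matrix.trace_conjTranspose,
        Matrix.conjTranspose_mul, hp]
    simp only [h2] at hsum
    rw [← Complex.ofReal_sum, Complex.ofReal_eq_zero,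
      Finset.sum_eq_zero_iff_of_nonneg (fun i _ => Complex.normSq_nonneg _)] at hsum
    exact fun i => Complex.normSq_eq_zero.mp (hsum i (Finset.mem_univ i))
  have h1A : ((1 : Mn n), (1 : Mn n)) ∈ A := Submodule.subset_span ⟨1, by simp⟩
  apply hp0
  have := congrArg (fun m => (p * m).trace) (he1 _ h1A)
  simp only [Finset.mul_sum, Matrix.mul_smul, Matrix.trace_sum, Matrix.trace_smul, hall,
    smul_zero, Finset.sum_const_zero, Matrix.mul_one] at this
  exact this.symm

/-- normalising factor. -/
theorem exists_normaliser (n : ℕ) (x : Mn n) (hx : x ≠ 0) :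
    ∃ h : Mn n, hᴴ = h ∧ (∀ b, b * (xᴴ * x) = (xᴴ * x) * b → b * h = h * b) ∧
      IsIdempotentElem (h * (xᴴ * x) * h) ∧ h * (xᴴ * x) * h ≠ 0 := by
  set a := xᴴ * x with ha
  have hpsd : a.PosSemidef := Matrix.posSemidef_conjTranspose_mul_self x
  have hsa : IsSelfAdjoint a := hpsd.1
  have hfin : (spectrum ℝ a).Finite := by
    rw [hpsd.1.spectrum_real_eq_range_eigenvalues]; exact Set.finite_range _
  have hnn : ∀ t ∈ spectrum ℝ a, 0 ≤ t := by
    rw [hpsd.1.spectrum_real_eq_range_eigenvalues]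
    rintro _ ⟨i, rfl⟩
    exact hpsd.eigenvalues_nonneg i
  have hc : ∀ f : ℝ → ℝ, ContinuousOn f (spectrum ℝ a) := fun f => hfin.continuousOn f
  let f : ℝ → ℝ := fun t => (√t)⁻¹
  have hg : cfc f a * a * cfc f a = cfc (fun t => f t * t * f t) a := by
    rw [cfc_mul _ _ a (hc _) (hc _), cfc_mul _ _ a (hc _) (hc _), cfc_id' ℝ a]
  have hft : ∀ t : ℝ, 0 ≤ t → t ≠ 0 → f t * t * f t = 1 := by
    intro t h0 h1
    have h2 : √t ≠ 0 := fun h => h1 ((Real.sqrt_eq_zero h0).mp h)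
    have h3 := Real.mul_self_sqrt h0
    simp only [f]
    field_simp
    nlinarith
  refine ⟨cfc f a, ?_, ?_, ?_, ?_⟩
  · exact (cfc_predicate f a : IsSelfAdjoint (cfc f a))
  · intro b hb
    exact ((Commute.cfc_real (show Commute a b from hb.symm) f).eq).symm
  · rw [hg]
    change _ * _ = _
    rw [← cfc_mul _ _ a (hc _) (hc _)]
    apply cfc_congr
    intro t ht
    by_cases h : t = 0
    · simp [h]
    · simp [hft t (hnn t ht) h]
  · rw [hg]
    intro h0
    have h1 : a * cfc (fun t => f t * t * f t) a = a := by
      have h2 : cfc (fun t => t * (f t * t * f t)) a = a * cfc (fun t => f t * t * f t) a := by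
        rw [cfc_mul _ _ a (hc _) (hc _), cfc_id' ℝ a]
      rw [← h2]
      conv_rhs => rw [← cfc_id' ℝ a]
      apply cfc_congr
      intro t ht
      by_cases h : t = 0
      · simp [h]
      · simp [hft t (hnn t ht) h]
    rw [h0, mul_zero] at h1
    exact hx (Matrix.conjTranspose_mul_self_eq_zero.mp h1.symm)

theorem step (n : ℕ) (Γ : Type) [Group Γ]
    (φ φ' : Γ →* Mn n)
    (hs : ∀ γ, (φ γ)ᴴ = φ γ⁻¹) (hs' : ∀ γ, (φ' γ)ᴴ = φ' γ⁻¹)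
    (htr : ∀ γ, (φ γ).trace = (φ' γ).trace)
    (w : Mn n) (hw : ∀ γ, w * φ γ = φ' γ * w) (hi : IsIdempotentElem (wᴴ * w)) (h1 : wᴴ * w ≠ 1) :
    ∃ w' : Mn n, (∀ γ, w' * φ γ = φ' γ * w') ∧ IsIdempotentElem (w'ᴴ * w') ∧
      (wᴴ * w).rank < (w'ᴴ * w').rank := by
  have hadj : ∀ y : Mn n, (∀ γ, y * φ γ = φ' γ * y) → ∀ γ, yᴴ * φ' γ = φ γ * yᴴ := by
    intro y hy γ
    have := congrArg conjTranspose (hy γ⁻¹)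
    simpa [Matrix.conjTranspose_mul, hs, hs'] using this.symm
  have hwa := hadj w hw
  -- w * (wᴴ w) = w
  have hww : w * (wᴴ * w) = w := by
    rw [← sub_eq_zero, ← (Matrix.conjTranspose_mul_self_eq_zero (A := w * (wᴴ * w) - w))]
    have hi' : wᴴ * w * (wᴴ * w) = wᴴ * w := hi
    simp only [Matrix.mul_assoc] at hi'
    simp only [Matrix.conjTranspose_sub, Matrix.conjTranspose_mul,
      Matrix.conjTranspose_conjTranspose, Matrix.sub_mul, Matrix.mul_sub, Matrix.mul_assoc, hi']
    simp
  have hww' : wᴴ * w * wᴴ = wᴴ := by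
    simpa [Matrix.conjTranspose_mul, Matrix.mul_assoc] using congrArg conjTranspose hww
  set p : Mn n := 1 - wᴴ * w with hp
  set q : Mn n := 1 - w * wᴴ with hq
  have hps : pᴴ = p := by simp [hp, Matrix.conjTranspose_mul]
  have hpp : p * p = p := hi.one_sub
  have hqs : qᴴ = q := by simp [hq, Matrix.conjTranspose_mul]
  have hwp : w * p = 0 := by rw [hp, Matrix.mul_sub, hww]; simp
  have hpw : p * wᴴ = 0 := by rw [hp, Matrix.sub_mul, hww']; simp
  have hwq : wᴴ * q = 0 := by rw [hq, Matrix.mul_sub, ← Matrix.mul_assoc, hww']; simp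
  have hqw : q * w = 0 := by rw [hq, Matrix.sub_mul, Matrix.mul_assoc, hww]; simp
  have hpc : ∀ γ, p * φ γ = φ γ * p := by
    intro γ
    rw [hp, Matrix.sub_mul, Matrix.mul_sub, Matrix.mul_assoc, hw, ← Matrix.mul_assoc, hwa]
    simp [Matrix.mul_assoc]
  have hqc : ∀ γ, q * φ' γ = φ' γ * q := by
    intro γ
    rw [hq, Matrix.sub_mul, Matrix.mul_sub, Matrix.mul_assoc, hwa, ← Matrix.mul_assoc, hw]
    simp [Matrix.mul_assoc]
  have hp0 : p.trace ≠ 0 := by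
    intro h
    have : (pᴴ * p).trace = 0 := by rw [hps, hpp, h]
    have := (trace_star_self p).2 this
    exact h1 (sub_eq_zero.mp this).symm
  have hpq : ∀ γ, (p * φ γ).trace = (q * φ' γ).trace := by
    intro γ
    rw [hp, hq, Matrix.sub_mul, Matrix.sub_mul, Matrix.trace_sub, Matrix.trace_sub,
      Matrix.one_mul, Matrix.one_mul, htr, Matrix.mul_assoc, hw, Matrix.mul_assoc, hwa,
      Matrix.trace_mul_comm, ← Matrix.mul_assoc, ← hw, Matrix.mul_assoc]
  obtain ⟨x₀, hx₀, hne⟩ := exists_nonzero_intertwiner n Γ φ φ' hs hs' p q hps hp0 hpq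
  set x := q * x₀ * p with hxd
  have hx : ∀ γ, x * φ γ = φ' γ * x := by
    intro γ
    rw [hxd, Matrix.mul_assoc, hpc, ← Matrix.mul_assoc, Matrix.mul_assoc q, hx₀,
      ← Matrix.mul_assoc, hqc]
    simp only [Matrix.mul_assoc]
  have hxa := hadj x hx
  obtain ⟨h, hh, hcomm, hid, hne'⟩ := exists_normaliser n x hne
  set v := x * h with hv
  have hvi : ∀ γ, v * φ γ = φ' γ * v := by
    intro γ
    have : φ γ * h = h * φ γ := by
      apply hcomm
      rw [← Matrix.mul_assoc, ← hxa, Matrix.mul_assoc, Matrix.mul_assoc, hx]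
    rw [hv, Matrix.mul_assoc, ← this, ← Matrix.mul_assoc, hx, Matrix.mul_assoc]
  have hvv : vᴴ * v = h * (xᴴ * x) * h := by
    rw [hv, Matrix.conjTranspose_mul, hh]; simp only [Matrix.mul_assoc]
  have hwv : wᴴ * v = 0 := by
    rw [hv, hxd, ← Matrix.mul_assoc, ← Matrix.mul_assoc, ← Matrix.mul_assoc, hwq]; simp
  have hvw : vᴴ * w = 0 := by
    simpa [Matrix.conjTranspose_mul] using congrArg conjTranspose hwv
  have hxp : p * (xᴴ * x) = (xᴴ * x) * p := by
    have e1 : x * p = x := by rw [hxd, Matrix.mul_assoc, hpp]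
    have e2 : p * xᴴ = xᴴ := by
      simpa [Matrix.conjTranspose_mul, hps] using congrArg conjTranspose e1
    rw [← Matrix.mul_assoc, e2, Matrix.mul_assoc, e1]
  have hvp : v * p = v := by
    rw [hv, Matrix.mul_assoc, ← hcomm p hxp, ← Matrix.mul_assoc, hxd, Matrix.mul_assoc (q * x₀), hpp]
  set r := vᴴ * v with hr
  have hrid : r * r = r := by rw [hvv]; exact hid
  have hrp : r * p = r := by rw [hr, Matrix.mul_assoc, hvp]
  have hpr : p * r = r := by
    have : rᴴ = r := by simp [hr, Matrix.conjTranspose_mul]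
    simpa [Matrix.conjTranspose_mul, hps, this] using congrArg conjTranspose hrp
  have hsum : (w + v)ᴴ * (w + v) = (1 - p) + r := by
    rw [Matrix.conjTranspose_add, Matrix.add_mul, Matrix.mul_add, Matrix.mul_add, hwv, hvw]
    simp [hp, hr]
  have hw1 : wᴴ * w = 1 - p := by simp [hp]
  refine ⟨w + v, ?_, ?_, ?_⟩
  · intro γ
    rw [Matrix.add_mul, Matrix.mul_add, hw, hvi]
  · rw [hsum]
    change (1 - p + r) * (1 - p + r) = _
    simp [mul_add, add_mul, mul_sub, sub_mul, hrid, hpp, hpr, hrp]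
  · rw [hsum, hw1]
    rw [Matrix.rank, Matrix.rank]
    apply Submodule.finrank_lt_finrank_of_lt
    refine lt_of_le_of_ne ?_ ?_
    · rintro _ ⟨y, rfl⟩
      refine ⟨(1 - p) *ᵥ y, ?_⟩
      have : (1 - p + r) * (1 - p) = 1 - p := by
        simp [mul_sub, add_mul, sub_mul, hpp, hrp]
      simp only [Matrix.mulVecLin_apply, Matrix.mulVec_mulVec, this]
    · intro heq
      apply hne'
      rw [← hvv]
      apply Matrix.mulVec_injective
      funext y
      have hy : (1 - p + r).mulVecLin y ∈ LinearMap.range (1 - p).mulVecLin := by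
        rw [heq]; exact ⟨y, rfl⟩
      obtain ⟨z, hz⟩ := hy
      simp only [Matrix.mulVecLin_apply] at hz
      have := congrArg (fun t => p *ᵥ t) hz
      simp only [Matrix.mulVec_mulVec] at this
      have e1 : p * (1 - p) = 0 := by simp [mul_sub, hpp]
      have e2 : p * (1 - p + r) = r := by rw [mul_add, e1, hpr, zero_add]
      rw [e1, e2] at this
      simpa using this.symm

theorem final (n : ℕ) (Γ : Type) [Group Γ]
    (φ φ' : Γ →* Mn n)
    (hs : ∀ γ, (φ γ)ᴴ = φ γ⁻¹) (hs' : ∀ γ, (φ' γ)ᴴ = φ' γ⁻¹)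
    (htr : ∀ γ, (φ γ).trace = (φ' γ).trace) :
    ∃ w : Mn n, (∀ γ, w * φ γ = φ' γ * w) ∧ wᴴ * w = 1 := by
  by_contra hcon
  push Not at hcon
  have key : ∀ k : ℕ, ∃ w : Mn n, (∀ γ, w * φ γ = φ' γ * w) ∧ IsIdempotentElem (wᴴ * w) ∧
      k ≤ (wᴴ * w).rank := by
    intro k
    induction k with
    | zero => exact ⟨0, by simp, by simp [IsIdempotentElem], by simp⟩
    | succ k ih =>
      obtain ⟨w, hw, hi, hk⟩ := ih
      obtain ⟨w', a, b, c⟩ := step n Γ φ φ' hs hs' htr w hw hi (hcon w hw)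
      exact ⟨w', a, b, by omega⟩
  obtain ⟨w, -, -, h⟩ := key (n + 1)
  have := Matrix.rank_le_width (wᴴ * w)
  omega

theorem statement14 (n : ℕ) (hn : 1 ≤ n) (Γ : Type) [Group Γ]
    (φ φ' : Γ →* Matrix (Fin n) (Fin n) ℂ)
    (hφ : ∀ γ, memU n (φ γ)) (hφ' : ∀ γ, memU n (φ' γ))
    (hloc : ∀ γ : Γ, ∃ u : Matrix (Fin n) (Fin n) ℂ,
      memU n u ∧ φ' γ = u * φ γ * u⁻¹) :
    ∃ u : Matrix (Fin n) (Fin n) ℂ, memU n u ∧ ∀ γ : Γ, φ' γ = u * φ γ * u⁻¹ := by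
  have hst : ∀ ψ : Γ →* Mn n, (∀ γ, memU n (ψ γ)) → ∀ γ, (ψ γ)ᴴ = ψ γ⁻¹ := by
    intro ψ hψ γ
    have h1 : (ψ γ)ᴴ * ψ γ = 1 := hψ γ
    have h2 : ψ γ * ψ γ⁻¹ = 1 := by rw [← map_mul]; simp
    exact left_inv_eq_right_inv h1 h2
  have htr : ∀ γ, (φ γ).trace = (φ' γ).trace := by
    intro γ
    obtain ⟨u, hu, h⟩ := hloc γ
    have h1 : uᴴ * u = 1 := hu
    rw [h, Matrix.trace_mul_comm, ← Matrix.mul_assoc, Matrix.inv_eq_left_inv h1, h1, Matrix.one_mul]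
  obtain ⟨w, hw, h1⟩ := final n Γ φ φ' (hst φ hφ) (hst φ' hφ') htr
  refine ⟨w, h1, fun γ => ?_⟩
  rw [hw, Matrix.inv_eq_left_inv h1, Matrix.mul_assoc, mul_eq_one_comm.mp h1, Matrix.mul_one]

end
end

section
/- Let Γ be a group and let φ, φ' : Γ → GL_n(ℂ) be group homomorphisms whose images have compact closure in GL_n(ℂ) (bounded image). If φ(γ) and φ'(γ) are conjugate in GL_n(ℂ) for every γ ∈ Γ, then there exists g ∈ GL_n(ℂ) with φ'(γ) = g φ(γ) g⁻¹ for all γ ∈ Γ. -/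
noncomputable section

open MeasureTheory in
theorem avg_gen {R : Type} [NormedRing R] [NormedAlgebra ℝ R] [CompleteSpace R]
    (Γ : Type) [Group Γ] (φ : Γ →* Rˣ)
    (hb : IsCompact (closure (Set.range (φ : Γ → Rˣ))))
    (p : R) (h : ∀ γ, (φ γ : R) * p = p * φ γ * p) :
    ∃ P : R, (∀ γ, (φ γ : R) * P = P * φ γ) ∧
      p * P = P ∧ P * p = p := by
  have hp : p * p = p := by simpa using (h 1).symm
  let K : Subgroup (Rˣ) := φ.range.topologicalClosure
  have hK : IsCompact (K : Set (Rˣ)) := by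
    simpa [K, Subgroup.topologicalClosure_coe, MonoidHom.coe_range] using hb
  have : CompactSpace K := isCompact_iff_compactSpace.mp hK
  let : MeasurableSpace K := borel K
  have : BorelSpace K := ⟨rfl⟩
  let μ : Measure K := Measure.haarMeasure ⊤
  have hμ : IsProbabilityMeasure μ := ⟨by
    have := Measure.haarMeasure_self (G := K) (K₀ := ⊤)
    simpa [μ] using this⟩
  let F : K → R := fun k => (k.1 : R) * p *
    ((k.1⁻¹ : Rˣ) : R)
  have hcoe : Continuous fun g : Rˣ => (g : R) :=
    Units.continuous_val
  have hcoe1 : Continuous fun k : K => (k.1 : R) :=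
    hcoe.comp continuous_subtype_val
  have hcoe2 : Continuous fun k : K => ((k.1⁻¹ : Rˣ) : R) :=
    hcoe.comp (continuous_subtype_val.inv)
  have hF : Continuous F := (hcoe1.mul continuous_const).mul hcoe2
  have hFi : Integrable F μ := hF.integrable_of_hasCompactSupport (HasCompactSupport.of_compactSpace F)
  have hKp : ∀ k ∈ K, (k : R) * p = p * k * p := by
    have hc : IsClosed {k : Rˣ | (k : R) * p = p * k * p} :=
      isClosed_eq (hcoe.mul continuous_const) ((continuous_const.mul hcoe).mul continuous_const)
    intro k hk
    refine closure_minimal ?_ hc hk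
    rintro _ ⟨γ, rfl⟩
    exact h γ
  have hmem : ∀ γ, φ γ ∈ K := fun γ => φ.range.le_topologicalClosure ⟨γ, rfl⟩
  refine ⟨∫ k, F k ∂μ, ?_, ?_, ?_⟩
  · intro γ
    have h1 : ∫ k, F ((⟨φ γ, hmem γ⟩ : K) * k) ∂μ = ∫ k, F k ∂μ := integral_mul_left_eq_self F _
    have h2 : ∀ k, F ((⟨φ γ, hmem γ⟩ : K) * k) =
        (φ γ : R) * F k * ((φ γ)⁻¹ : Rˣ) := by
      intro k; simp only [F, Subgroup.coe_mul, mul_inv_rev, Units.val_mul, mul_assoc]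
    simp_rw [h2] at h1
    rw [integral_mul_const_of_integrable (hFi.const_mul _),
      integral_const_mul_of_integrable hFi] at h1
    conv_rhs => rw [← h1]
    rw [mul_assoc _ _ ((φ γ : Rˣ) : R), Units.inv_mul, mul_one]
  · rw [← integral_const_mul_of_integrable hFi]
    congr 1; ext1 k
    simp only [F]
    rw [← mul_assoc, ← mul_assoc, ← hKp _ k.2]
  · rw [← integral_mul_const_of_integrable hFi]
    have : ∀ k, F k * p = p := by
      intro k
      have h3 := hKp _ (K.inv_mem k.2)
      simp only [F]
      rw [mul_assoc, h3, ← mul_assoc, ← mul_assoc, mul_assoc _ p p, hp, mul_assoc (k.1 : R), mul_assoc (k.1 : R), ← h3, ← mul_assoc, Units.mul_inv, one_mul]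
    simp [this]

theorem avg_exists (n : ℕ) (Γ : Type) [Group Γ] (φ : Γ →* GL (Fin n) ℂ)
    (hb : IsCompact (closure (Set.range (φ : Γ → GL (Fin n) ℂ))))
    (p : Matrix (Fin n) (Fin n) ℂ) (h : ∀ γ, (φ γ : Matrix (Fin n) (Fin n) ℂ) * p = p * φ γ * p) :
    ∃ P : Matrix (Fin n) (Fin n) ℂ, (∀ γ, (φ γ : Matrix (Fin n) (Fin n) ℂ) * P = P * φ γ) ∧
      p * P = P ∧ P * p = p := by
  let i1 : NormedRing (Matrix (Fin n) (Fin n) ℂ) := Matrix.linftyOpNormedRing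
  let i2 : NormedAlgebra ℝ (Matrix (Fin n) (Fin n) ℂ) := Matrix.linftyOpNormedAlgebra
  let i3 : CompleteSpace (Matrix (Fin n) (Fin n) ℂ) := FiniteDimensional.complete ℝ _
  exact @avg_gen (Matrix (Fin n) (Fin n) ℂ) i1 i2 i3 Γ _ φ hb p h

section alg
variable {A : Type} [Ring A] [Algebra ℂ A]

def chi (V : Type) [AddCommGroup V] [Module ℂ V] [Module A V] [IsScalarTower ℂ A V] (a : A) : ℂ :=
  LinearMap.trace ℂ V (Algebra.lsmul ℂ ℂ V a)

variable {V W : Type} [AddCommGroup V] [Module ℂ V] [Module A V] [IsScalarTower ℂ A V]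
   [AddCommGroup W] [Module ℂ W] [Module A W] [IsScalarTower ℂ A W]

theorem chi_congr (e : V ≃ₗ[A] W) (a : A) : chi V a = chi W a := by
  unfold chi
  rw [← LinearMap.trace_conj' _ (e.restrictScalars ℂ)]
  congr 1
  ext x
  simp [LinearEquiv.conj_apply]

theorem chi_prod [FiniteDimensional ℂ V] [FiniteDimensional ℂ W] (a : A) :
    chi (V × W) a = chi V a + chi W a := by
  unfold chi
  rw [← LinearMap.trace_prodMap']
  rfl

theorem no_hom [FiniteDimensional ℂ V] [FiniteDimensional ℂ W] [IsSemisimpleModule A V]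
    [IsSemisimpleModule A W] (h : ∀ a : A, chi V a = chi W a)
    (h1 : ∀ f : V →ₗ[A] W, f = 0) (h2 : ∀ f : W →ₗ[A] V, f = 0) :
    Module.finrank ℂ V = 0 := by
  let f : Module.End (Module.End A (V × W)) (V × W) :=
    { toFun := fun x => (x.1, 0)
      map_add' := by intro x y; simp
      map_smul' := by
        intro g x
        have e1 := LinearMap.congr_fun (h1 (LinearMap.snd A V W ∘ₗ g ∘ₗ LinearMap.inl A V W)) x.1
        have e2 := LinearMap.congr_fun (h2 (LinearMap.fst A V W ∘ₗ g ∘ₗ LinearMap.inr A V W)) x.2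
        have e3 : g x = g (x.1, 0) + g (0, x.2) := by rw [← map_add]; simp
        simp at e1 e2
        ext <;> simp [e1, e2, e3] }
  have hss : IsSemisimpleModule A (V × W) := by
    have h3 := IsSemisimpleModule.range (LinearMap.inl A V W)
    have h4 := IsSemisimpleModule.range (LinearMap.inr A V W)
    have h5 := IsSemisimpleModule.sup h3 h4
    rw [LinearMap.sup_range_inl_inr] at h5
    exact IsSemisimpleModule.congr Submodule.topEquiv.symm
  let bV := Module.finBasis ℂ V
  let bW := Module.finBasis ℂ W
  classical
  obtain ⟨a, ha⟩ := jacobson_density (R := A) f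
    (Finset.univ.image (fun i => ((bV i, 0) : V × W)) ∪
      Finset.univ.image (fun i => ((0, bW i) : V × W)))
  have hV : Algebra.lsmul ℂ ℂ V a = LinearMap.id := by
    apply bV.ext
    intro i
    have := ha (bV i, 0) (by simp)
    simpa [f] using (congrArg Prod.fst this).symm
  have hW : Algebra.lsmul ℂ ℂ W a = 0 := by
    apply bW.ext
    intro i
    have := ha (0, bW i) (by simp)
    simpa [f] using (congrArg Prod.snd this).symm
  have := h a
  unfold chi at this
  rw [hV, hW] at this
  simpa using this

theorem chi_finrank [FiniteDimensional ℂ V] : chi V (1 : A) = Module.finrank ℂ V := by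
  unfold chi
  rw [map_one, LinearMap.trace_one]

end alg

theorem iso_aux {A : Type} [Ring A] [Algebra ℂ A] (m : ℕ) :
  ∀ (V W : Type) [AddCommGroup V] [Module ℂ V] [Module A V] [IsScalarTower ℂ A V]
   [AddCommGroup W] [Module ℂ W] [Module A W] [IsScalarTower ℂ A W]
   [FiniteDimensional ℂ V] [FiniteDimensional ℂ W] [IsSemisimpleModule A V]
    [IsSemisimpleModule A W], (∀ a : A, chi V a = chi W a) → Module.finrank ℂ V = m →
    Nonempty (V ≃ₗ[A] W) := by
  induction m using Nat.strong_induction_on with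
  | _ m ih =>
  have key : ∀ (V W : Type) [AddCommGroup V] [Module ℂ V] [Module A V] [IsScalarTower ℂ A V]
   [AddCommGroup W] [Module ℂ W] [Module A W] [IsScalarTower ℂ A W]
   [FiniteDimensional ℂ V] [FiniteDimensional ℂ W] [IsSemisimpleModule A V]
    [IsSemisimpleModule A W], (∀ a : A, chi V a = chi W a) → Module.finrank ℂ V = m →
    ∀ f : V →ₗ[A] W, f ≠ 0 → Nonempty (V ≃ₗ[A] W) := by
    intro V W _ _ _ _ _ _ _ _ _ _ _ _ h hm f hf
    obtain ⟨C, hC⟩ := exists_isCompl (LinearMap.ker f)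
    obtain ⟨D, hD⟩ := exists_isCompl (LinearMap.range f)
    have : FiniteDimensional ℂ (LinearMap.ker f) :=
      inferInstanceAs (FiniteDimensional ℂ ((LinearMap.ker f).restrictScalars ℂ))
    have : FiniteDimensional ℂ (LinearMap.range f) :=
      inferInstanceAs (FiniteDimensional ℂ ((LinearMap.range f).restrictScalars ℂ))
    have : FiniteDimensional ℂ C :=
      inferInstanceAs (FiniteDimensional ℂ (C.restrictScalars ℂ))
    have : FiniteDimensional ℂ D :=
      inferInstanceAs (FiniteDimensional ℂ (D.restrictScalars ℂ))
    let e1 : C ≃ₗ[A] LinearMap.range f :=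
      (Submodule.quotientEquivOfIsCompl _ _ hC).symm.trans f.quotKerEquivRange
    let e2 := Submodule.prodEquivOfIsCompl _ _ hC
    let e3 := Submodule.prodEquivOfIsCompl _ _ hD
    have hlt : Module.finrank ℂ (LinearMap.ker f) < m := by
      rw [← hm]
      refine Submodule.finrank_lt (s := (LinearMap.ker f).restrictScalars ℂ) ?_
      intro ht
      apply hf
      rw [Submodule.restrictScalars_eq_top_iff] at ht
      exact LinearMap.ker_eq_top.mp ht
    obtain ⟨e4⟩ := ih _ hlt (LinearMap.ker f) D (by
      intro a
      have t1 := chi_congr e2 a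
      have t2 := chi_congr e3 a
      have t3 := chi_congr e1 a
      rw [chi_prod] at t1 t2
      have := h a
      rw [← t1, ← t2, t3, add_comm] at this
      exact add_left_cancel this) rfl
    exact ⟨e2.symm.trans ((e4.prodCongr e1).trans ((LinearEquiv.prodComm A _ _).trans e3))⟩
  intro V W _ _ _ _ _ _ _ _ _ _ _ _ h hm
  have hVW : Module.finrank ℂ V = Module.finrank ℂ W := by
    have := h 1
    rw [chi_finrank, chi_finrank] at this
    exact_mod_cast this
  by_cases h1 : ∀ f : V →ₗ[A] W, f = 0
  · by_cases h2 : ∀ f : W →ₗ[A] V, f = 0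
    · have h0 := no_hom h h1 h2
      have : Subsingleton V := Module.finrank_zero_iff.mp h0
      have : Subsingleton W := Module.finrank_zero_iff.mp (hVW ▸ h0)
      exact ⟨LinearEquiv.ofSubsingleton V W⟩
    · push Not at h2
      obtain ⟨f, hf⟩ := h2
      exact (key W V (fun a => (h a).symm) (hVW ▸ hm) f hf).map LinearEquiv.symm
  · push Not at h1
    obtain ⟨f, hf⟩ := h1
    exact key V W h hm f hf

def rep {n : ℕ} {Γ : Type} [Group Γ] (φ : Γ →* GL (Fin n) ℂ) :
    Representation ℂ Γ (Fin n → ℂ) :=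
  (Matrix.toLinAlgEquiv' : Matrix (Fin n) (Fin n) ℂ ≃ₐ[ℂ] _).toAlgHom.toMonoidHom.comp
    ((Units.coeHom _).comp φ)

theorem rep_apply {n : ℕ} {Γ : Type} [Group Γ] (φ : Γ →* GL (Fin n) ℂ) (γ : Γ) :
    rep φ γ = Matrix.toLin' (φ γ : Matrix (Fin n) (Fin n) ℂ) := rfl

theorem rep_semisimple {n : ℕ} {Γ : Type} [Group Γ] (φ : Γ →* GL (Fin n) ℂ)
    (hb : IsCompact (closure (Set.range (φ : Γ → GL (Fin n) ℂ)))) :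
    IsSemisimpleModule (MonoidAlgebra ℂ Γ) (rep φ).asModule := by
  rw [← Representation.isSemisimpleRepresentation_iff_isSemisimpleModule_asModule]
  refine ⟨fun U => ?_⟩
  obtain ⟨q, hq⟩ := U.toSubmodule.exists_isCompl
  let pl : (Fin n → ℂ) →ₗ[ℂ] (Fin n → ℂ) := U.toSubmodule.projection q hq
  have hpl1 : ∀ x, pl x ∈ U.toSubmodule := fun x => Submodule.projection_apply_mem hq x
  have hpl2 : ∀ x ∈ U.toSubmodule, pl x = x :=
    fun x hx => Submodule.projection_apply_of_mem_left hq hx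
  obtain ⟨P, hP1, hP2, hP3⟩ := avg_exists n Γ φ hb (LinearMap.toMatrix' pl) (by
    intro γ
    apply Matrix.toLin'.injective
    ext1 i
    ext1
    simp only [Matrix.toLin'_mul, Matrix.toLin'_toMatrix', LinearMap.comp_apply]
    exact (hpl2 _ (U.apply_mem_toSubmodule γ (hpl1 _))).symm)
  have hPU : ∀ x, Matrix.toLin' P x ∈ U.toSubmodule := by
    intro x
    rw [← hP2, Matrix.toLin'_mul, Matrix.toLin'_toMatrix']
    exact hpl1 _
  have hPid : ∀ x ∈ U.toSubmodule, Matrix.toLin' P x = x := by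
    intro x hx
    have := congrArg (fun M => Matrix.toLin' M x) hP3
    simpa only [Matrix.toLin'_mul, Matrix.toLin'_toMatrix', LinearMap.comp_apply, hpl2 x hx] using this
  have hc := LinearMap.isCompl_of_proj (f := (Matrix.toLin' P).codRestrict U.toSubmodule hPU)
    (fun x => Subtype.ext (hPid _ x.2))
  rw [LinearMap.ker_codRestrict] at hc
  refine ⟨⟨LinearMap.ker (Matrix.toLin' P), ?_⟩, ?_⟩
  · intro γ v hv
    rw [LinearMap.mem_ker] at hv ⊢
    rw [rep_apply, ← LinearMap.comp_apply, ← Matrix.toLin'_mul, ← hP1, Matrix.toLin'_mul,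
      LinearMap.comp_apply, hv, map_zero]
  · refine IsCompl.of_eq ?_ ?_
    · exact Subrepresentation.toSubmodule_injective hc.inf_eq_bot
    · exact Subrepresentation.toSubmodule_injective hc.sup_eq_top

/-- Pointwise conjugate homomorphisms of a group `Γ` into `GL_n(ℂ)` with bounded image
(compact closure of the image in `GL_n(ℂ)`) are globally conjugate. -/
theorem statement15 (n : ℕ) (Γ : Type) [Group Γ]
    (φ φ' : Γ →* GL (Fin n) ℂ)
    (hb : IsCompact (closure (Set.range (φ : Γ → GL (Fin n) ℂ))))
    (hb' : IsCompact (closure (Set.range (φ' : Γ → GL (Fin n) ℂ))))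
    (hloc : ∀ γ : Γ, ∃ g : GL (Fin n) ℂ, φ' γ = g * φ γ * g⁻¹) :
    ∃ g : GL (Fin n) ℂ, ∀ γ : Γ, φ' γ = g * φ γ * g⁻¹ := by
  have := rep_semisimple φ hb
  have := rep_semisimple φ' hb'
  obtain ⟨e⟩ := iso_aux (A := MonoidAlgebra ℂ Γ) _ (rep φ).asModule (rep φ').asModule (by
    intro a
    unfold chi
    induction a using MonoidAlgebra.induction_linear with
    | zero => simp
    | add f g hf hg => simp [hf, hg]
    | single γ c =>
      have h1 : ∀ ψ : Γ →* GL (Fin n) ℂ, Algebra.lsmul ℂ ℂ (rep ψ).asModule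
          (MonoidAlgebra.single γ c : MonoidAlgebra ℂ Γ) =
          c • (Matrix.toLin' (ψ γ : Matrix (Fin n) (Fin n) ℂ) : (Fin n → ℂ) →ₗ[ℂ] (Fin n → ℂ)) := by
        intro ψ
        ext1 x
        exact Representation.single_smul _ _ _ _
      have h2 : ∀ ψ : Γ →* GL (Fin n) ℂ, LinearMap.trace ℂ (rep ψ).asModule (Algebra.lsmul ℂ ℂ (rep ψ).asModule
          (MonoidAlgebra.single γ c : MonoidAlgebra ℂ Γ)) = c • (ψ γ : Matrix (Fin n) (Fin n) ℂ).trace := by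
        intro ψ
        rw [h1]
        change LinearMap.trace ℂ (Fin n → ℂ) _ = _
        rw [map_smul, Matrix.trace_toLin'_eq]
      rw [h2, h2]
      obtain ⟨g, hg⟩ := hloc γ
      rw [hg]
      rw [Units.val_mul, Units.val_mul, Matrix.trace_units_conj]) rfl
  let L : (Fin n → ℂ) ≃ₗ[ℂ] (Fin n → ℂ) := e.restrictScalars ℂ
  have hL : ∀ γ x, L ((φ γ : Matrix (Fin n) (Fin n) ℂ).mulVec x) =
      (φ' γ : Matrix (Fin n) (Fin n) ℂ).mulVec (L x) := by
    intro γ x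
    have h1 := e.map_smul (MonoidAlgebra.single γ (1:ℂ)) ((rep φ).asModuleEquiv.symm x)
    rw [Representation.single_smul, Representation.single_smul, one_smul, one_smul] at h1
    exact h1
  let g : GL (Fin n) ℂ := ⟨LinearMap.toMatrix' L, LinearMap.toMatrix' L.symm,
    by rw [← LinearMap.toMatrix'_comp]; simp, by rw [← LinearMap.toMatrix'_comp]; simp⟩
  refine ⟨g, fun γ => ?_⟩
  rw [eq_mul_inv_iff_mul_eq]
  apply Units.ext
  apply Matrix.toLin'.injective
  refine LinearMap.ext fun x => ?_
  simp only [Units.val_mul, Matrix.toLin'_mul, LinearMap.comp_apply, g, Matrix.toLin'_toMatrix']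
  exact (hL γ x).symm

end
end
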